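/- arXiv:2207.03594 — 5 statements merged into one kernel-verified Lean document; each statement's English description precedes it below -/
import Mathlib

section
/- Let A = {t_0 < t_1 < ... < t_{q-1}} be a σ_d-rotational set with rotation number p/q, i.e. σ_d(t_i) = t_{i+p} for all i (indices mod q). Then: (1) A is the union of exactly n = gcd(p,q) distinct orbits under σ_d, each of size q/n; (2) each of these orbits is itself a σ_d-rotational set with rotation number p/q (that is, with rotation number (p/n)/(q/n)); (3) the orbits are interlaced, meaning: for any n consecutive elements t_a, t_{a+1}, ..., t_{a+n-1} of A (indices mod q), no two of these elements belong to the same orbit. -/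
/-- The angle-multiplying map `σ_d : 𝕋 → 𝕋`, where the circle `𝕋 = ℝ/ℤ` is identified with
the set of representatives `[0,1) ⊆ ℝ` (and so ordered by comparing these representatives). -/
noncomputable def sigmad (d : ℕ) (t : ℝ) : ℝ := Int.fract (d * t)

/-- The orbit of a point of the circle under `σ_d`. -/
def sigmaOrbit (d : ℕ) (t : ℝ) : Set ℝ := {s | ∃ k : ℕ, (sigmad d)^[k] t = s}

/-- `t : ZMod q → ℝ` lists (with indices viewed in `ℤ/qℤ`) the elements
`t 0 < t 1 < ⋯ < t (q-1)` of a `σ_d`-rotational set with rotation number `p/q`: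
the points lie on the circle (representatives in `[0,1)`), are indexed in increasing
order, `p ≠ 0`, and `σ_d (t i) = t (i + p)` for all `i`. -/
def IsRotational (d q : ℕ) (p : ZMod q) (t : ZMod q → ℝ) : Prop :=
  (∀ i, t i ∈ Set.Ico (0:ℝ) 1) ∧
  (∀ i j : ZMod q, i.val < j.val → t i < t j) ∧
  p ≠ 0 ∧
  ∀ i, sigmad d (t i) = t (i + p)

theorem rot_iter (d q : ℕ) (p : ZMod q) (t : ZMod q → ℝ)
    (h : ∀ i, sigmad d (t i) = t (i + p)) (k : ℕ) (i : ZMod q) :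
    (sigmad d)^[k] (t i) = t (i + k * p) := by
  induction k generalizing i with
  | zero => simp
  | succ k ih =>
    rw [Function.iterate_succ_apply, h, ih]
    congr 1
    push_cast
    ring

theorem rot_index (q : ℕ) [NeZero q] (p i j : ZMod q) :
    (∃ k : ℕ, i + k * p = j) ↔ i.val ≡ j.val [MOD Nat.gcd p.val q] := by
  have hn : Nat.gcd p.val q ∣ q := Nat.gcd_dvd_right _ _
  have hb := Nat.gcd_eq_gcd_ab p.val q
  have hp : Nat.gcd p.val q ∣ p.val := Nat.gcd_dvd_left _ _
  constructor
  · rintro ⟨k, rfl⟩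
    have h1 : ((i.val + k * p.val : ℕ) : ZMod q) = (((i + k * p).val : ℕ) : ZMod q) := by
      push_cast
      simp
    have h2 := ((ZMod.natCast_eq_natCast_iff _ _ _).1 h1).of_dvd hn
    refine Nat.ModEq.trans ?_ h2
    have h3 : k * p.val ≡ 0 [MOD Nat.gcd p.val q] :=
      (Nat.modEq_zero_iff_dvd).2 (hp.mul_left k)
    simpa using (h3.add_left i.val).symm
  · intro h
    obtain ⟨c, hc⟩ := h.dvd
    refine ⟨((Nat.gcdA p.val q * c : ℤ) : ZMod q).val, ?_⟩
    have hb' := congrArg (fun z : ℤ => (z : ZMod q)) hb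
    have hc' := congrArg (fun z : ℤ => (z : ZMod q)) hc
    simp only [Int.cast_add, Int.cast_mul, Int.cast_natCast, ZMod.natCast_self,
      ZMod.natCast_zmod_val, Int.cast_sub] at hb' hc'
    rw [ZMod.natCast_zmod_val]
    push_cast
    rw [hb'] at hc'
    linear_combination -hc'

theorem rot_inj (q : ℕ) [NeZero q] (t : ZMod q → ℝ)
    (h : ∀ i j : ZMod q, i.val < j.val → t i < t j) : Function.Injective t := by
  intro i j hij
  rcases lt_trichotomy i.val j.val with h1 | h1 | h1
  · exact absurd hij (h _ _ h1).ne
  · exact ZMod.val_injective q h1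
  · exact absurd hij (h _ _ h1).ne'

theorem stmt0 (d q : ℕ) (hd : 2 ≤ d) (hq : 1 ≤ q) (p : ZMod q)
    (t : ZMod q → ℝ) (h : IsRotational d q p t) :
    -- (1) `A = range t` is the union of exactly `n = gcd(p,q)` distinct orbits …
    {O : Set ℝ | ∃ x ∈ Set.range t, O = sigmaOrbit d x}.ncard = Nat.gcd p.val q ∧
    ⋃₀ {O : Set ℝ | ∃ x ∈ Set.range t, O = sigmaOrbit d x} = Set.range t ∧
    -- … each of size `q/n`, and (2) each orbit is `σ_d`-rotational with
    -- rotation number `(p/n)/(q/n)`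
    (∀ O ∈ {O : Set ℝ | ∃ x ∈ Set.range t, O = sigmaOrbit d x},
      O.ncard = q / Nat.gcd p.val q ∧
      ∃ u : ZMod (q / Nat.gcd p.val q) → ℝ, Set.range u = O ∧
        IsRotational d (q / Nat.gcd p.val q)
          ((p.val / Nat.gcd p.val q : ℕ) : ZMod (q / Nat.gcd p.val q)) u) ∧
    -- (3) the orbits are interlaced: among any `n` consecutive elements of `A`,
    -- no two belong to the same orbit
    (∀ (i : ZMod q) (k l : ℕ), k < Nat.gcd p.val q → l < Nat.gcd p.val q → k ≠ l →
      sigmaOrbit d (t (i + (k : ZMod q))) ≠ sigmaOrbit d (t (i + (l : ZMod q)))) := by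
  haveI : NeZero q := ⟨by omega⟩
  obtain ⟨hI, hmono, hp0, hs⟩ := h
  have hinj := rot_inj q t hmono
  have hmem : ∀ i j, t j ∈ sigmaOrbit d (t i) ↔ i.val ≡ j.val [MOD Nat.gcd p.val q] := by
    intro i j
    rw [← rot_index]
    simp only [sigmaOrbit, Set.mem_setOf_eq, rot_iter d q p t hs, hinj.eq_iff]
  have hsub : ∀ i, sigmaOrbit d (t i) ⊆ Set.range t := by
    rintro i x ⟨k, rfl⟩
    rw [rot_iter d q p t hs]
    exact ⟨_, rfl⟩
  have heq : ∀ i j, sigmaOrbit d (t i) = sigmaOrbit d (t j) ↔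
      i.val ≡ j.val [MOD Nat.gcd p.val q] := by
    intro i j
    constructor
    · intro h
      rw [← hmem, h, hmem]
    · intro h
      apply Set.Subset.antisymm
      · intro x hx
        obtain ⟨l, rfl⟩ := hsub _ hx
        rw [hmem] at hx ⊢
        exact h.symm.trans hx
      · intro x hx
        obtain ⟨l, rfl⟩ := hsub _ hx
        rw [hmem] at hx ⊢
        exact h.trans hx
  have hnq : Nat.gcd p.val q ∣ q := Nat.gcd_dvd_right _ _
  have hnp : Nat.gcd p.val q ∣ p.val := Nat.gcd_dvd_left _ _
  have hn0 : 0 < Nat.gcd p.val q := Nat.gcd_pos_of_pos_right _ hq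
  have hpq : p.val < q := ZMod.val_lt p
  have hpv : p.val ≠ 0 := by simpa using hp0
  generalize Nat.gcd p.val q = n at *
  obtain ⟨m, hm⟩ := hnq
  obtain ⟨p', hp'⟩ := hnp
  have hqn : q / n = m := by rw [hm]; exact Nat.mul_div_cancel_left _ hn0
  have hpn : p.val / n = p' := by rw [hp']; exact Nat.mul_div_cancel_left _ hn0
  rw [hqn, hpn]
  have hm0 : 0 < m := by
    rcases Nat.eq_zero_or_pos m with h | h
    · subst h; omega
    · exact h
  haveI : NeZero m := ⟨hm0.ne'⟩
  have hnq' : n ≤ q := by rw [hm]; exact Nat.le_mul_of_pos_right _ hm0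
  refine ⟨?_, ?_, ?_, ?_⟩
  · have hset : {O : Set ℝ | ∃ x ∈ Set.range t, O = sigmaOrbit d x} =
        Set.range (fun r : Fin n => sigmaOrbit d (t ((r : ℕ) : ZMod q))) := by
      ext O
      constructor
      · rintro ⟨_, ⟨i, rfl⟩, rfl⟩
        refine ⟨⟨i.val % n, Nat.mod_lt _ hn0⟩, ?_⟩
        simp only
        rw [heq, ZMod.val_natCast_of_lt ((Nat.mod_lt _ hn0).trans_le hnq')]
        exact Nat.mod_modEq _ _
      · rintro ⟨r, rfl⟩
        exact ⟨_, ⟨_, rfl⟩, rfl⟩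
    rw [hset, ← Nat.card_coe_set_eq, Nat.card_range_of_injective, Nat.card_fin]
    intro r s hrs
    simp only at hrs
    rw [heq, ZMod.val_natCast_of_lt (r.2.trans_le hnq'),
      ZMod.val_natCast_of_lt (s.2.trans_le hnq')] at hrs
    exact Fin.ext (hrs.eq_of_lt_of_lt r.2 s.2)
  · apply Set.Subset.antisymm
    · rintro x ⟨_, ⟨_, ⟨i, rfl⟩, rfl⟩, hx⟩
      exact hsub _ hx
    · rintro _ ⟨i, rfl⟩
      exact ⟨_, ⟨_, ⟨i, rfl⟩, rfl⟩, 0, rfl⟩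
  · rintro _ ⟨_, ⟨i, rfl⟩, rfl⟩
    have hr : i.val % n < n := Nat.mod_lt _ hn0
    have hri : i.val % n ≡ i.val [MOD n] := Nat.mod_modEq _ _
    generalize i.val % n = r at *
    have hval : ∀ c : ZMod m, ((r + n * c.val : ℕ) : ZMod q).val = r + n * c.val := by
      intro c
      apply ZMod.val_natCast_of_lt
      have := ZMod.val_lt c
      rw [hm]
      nlinarith
    have hrange : Set.range (fun c : ZMod m => t ((r + n * c.val : ℕ) : ZMod q)) =
        sigmaOrbit d (t i) := by
      apply Set.Subset.antisymm
      · rintro _ ⟨c, rfl⟩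
        simp only
        rw [hmem, hval]
        refine hri.symm.trans ?_
        simp [Nat.ModEq]
      · intro x hx
        obtain ⟨j, rfl⟩ := hsub _ hx
        rw [hmem] at hx
        have hj : j.val % n = r := by
          have := hri.trans hx
          rw [Nat.ModEq, Nat.mod_eq_of_lt hr] at this
          exact this.symm
        have hjm : j.val / n < m := by
          apply Nat.div_lt_of_lt_mul
          rw [← hm]
          exact ZMod.val_lt j
        refine ⟨((j.val / n : ℕ) : ZMod m), ?_⟩
        simp only
        rw [ZMod.val_natCast_of_lt hjm, ← hj, Nat.mod_add_div, ZMod.natCast_zmod_val]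
    have hmono' : ∀ a b : ZMod m, a.val < b.val →
        t ((r + n * a.val : ℕ) : ZMod q) < t ((r + n * b.val : ℕ) : ZMod q) := by
      intro a b hab
      apply hmono
      rw [hval, hval]
      have := Nat.mul_lt_mul_of_pos_left hab hn0
      omega
    refine ⟨?_, _, hrange, fun c => hI _, hmono', ?_, ?_⟩
    · rw [← hrange, ← Nat.card_coe_set_eq, Nat.card_range_of_injective, Nat.card_zmod]
      exact rot_inj m _ hmono'
    · intro h0
      rw [ZMod.natCast_eq_zero_iff] at h0
      have hlt : p' < m := by
        apply Nat.lt_of_mul_lt_mul_left (a := n)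
        rw [← hp', ← hm]
        exact hpq
      have := Nat.eq_zero_of_dvd_of_lt h0 hlt
      apply hpv
      rw [hp', this, mul_zero]
    · intro c
      simp only
      rw [hs]
      congr 1
      have h1 : ((c.val + p' : ℕ) : ZMod m) = (((c + (p' : ZMod m)).val : ℕ) : ZMod m) := by
        push_cast
        simp
      have h2 := ((ZMod.natCast_eq_natCast_iff _ _ _).1 h1).mul_left' n
      rw [← hm] at h2
      have h3 := (ZMod.natCast_eq_natCast_iff _ _ _).2 h2
      have h4 : p = ((n * p' : ℕ) : ZMod q) := by
        rw [← hp', ZMod.natCast_zmod_val]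
      rw [Nat.cast_add, Nat.cast_add, ← h3]
      nth_rewrite 1 [h4]
      push_cast
      ring
  · intro i k l hk hl hkl h
    rw [heq] at h
    apply hkl
    have hv : ∀ k : ℕ, i.val + k ≡ (i + (k : ZMod q)).val [MOD n] := by
      intro k
      have h1 : ((i.val + k : ℕ) : ZMod q) = (((i + (k : ZMod q)).val : ℕ) : ZMod q) := by
        push_cast
        simp
      exact ((ZMod.natCast_eq_natCast_iff _ _ _).1 h1).of_dvd ⟨m, hm⟩
    have h2 := ((hv k).trans h).trans (hv l).symm
    exact (Nat.ModEq.add_left_cancel' _ h2).eq_of_lt_of_lt hk hl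
end

section
/- Let s = (a_0, a_1, ..., a_{q-1}) and t = (b_0, b_1, ..., b_{q-1}) be distinct points of T (given as q-tuples of digits in {0, ..., d−1}) such that the orbit of s and the orbit of t under σ_d are each σ_d-rotational sets. Then a_0 < b_0 if and only if there exists r ∈ T with s < r < t and σ_d(r) = 0. -/
/-- A subset of the circle is a `σ_d`-rotational set if it can be listed in increasing
order as `t_0 < t_1 < ⋯ < t_{q-1}` with `σ_d(t_i) = t_{i+p}` for some `p ≠ 0` in `ℤ/qℤ`. -/
def IsRotationalSet (d : ℕ) (A : Set ℝ) : Prop :=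
  ∃ (q : ℕ) (p : ZMod q) (t : ZMod q → ℝ), Set.range t = A ∧ IsRotational d q p t

/-- The point of the circle with repeating base-`d` expansion `0.‾(a_0 a_1 … a_{q-1})`. -/
noncomputable def tuplePoint (d q : ℕ) (a : ZMod q → ℕ) : ℝ :=
  Int.fract ((∑ i ∈ Finset.range q, (a (i : ZMod q) : ℝ) * (d : ℝ) ^ (q - 1 - i)) /
    ((d : ℝ) ^ q - 1))

theorem zero_notMem_rot (d : ℕ) (A : Set ℝ) (h : IsRotationalSet d A) : (0:ℝ) ∉ A := by
  obtain ⟨q, p, t, rfl, h1, h2, h3, h4⟩ := h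
  rintro ⟨i, hi⟩
  have h5 := h4 i
  rw [hi] at h5
  have h6 : t (i + p) = 0 := by rw [← h5]; simp [sigmad]
  have hv : (i + p).val = i.val := by
    rcases lt_trichotomy (i + p).val i.val with h | h | h
    · have := h2 _ _ h; linarith
    · exact h
    · have := h2 _ _ h; linarith
  rcases Nat.eq_zero_or_pos q with rfl | hq
  · by_cases hi0 : i = 0
    · subst hi0
      apply h3
      exact Int.natAbs_eq_zero.mp (by simpa [ZMod.val] using hv)
    · have : (0 : ZMod 0).val < i.val := by
        have : i.val ≠ 0 := fun h => hi0 (Int.natAbs_eq_zero.mp h)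
        have h0 : (0 : ZMod 0).val = 0 := rfl
        omega
      have := h2 _ _ this
      have := (h1 0).1
      linarith
  · have : NeZero q := ⟨hq.ne'⟩
    have := ZMod.val_injective q hv
    exact h3 (by simpa using this)

theorem digit_sum_le (d : ℕ) (hd : 2 ≤ d) (n : ℕ) : ∀ f : ℕ → ℕ, (∀ i, f i < d) →
    ∑ i ∈ Finset.range n, (f i : ℝ) * (d : ℝ) ^ (n - 1 - i) ≤ (d:ℝ) ^ n - 1 := by
  induction n with
  | zero => intro f _; simp
  | succ n ih =>
    intro f hf
    have h := ih (fun i => f (i + 1)) (fun i => hf _)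
    rw [Finset.sum_range_succ']
    have e : ∀ i, n + 1 - 1 - (i + 1) = n - 1 - i := fun i => by omega
    simp only [e]
    simp only [Nat.add_sub_cancel, Nat.sub_zero]
    have h0 : (f 0 : ℝ) ≤ d - 1 := by
      have := hf 0
      have : (f 0 : ℝ) + 1 ≤ d := by exact_mod_cast this
      linarith
    have hp : (0:ℝ) < (d:ℝ) ^ n := by positivity
    have := mul_le_mul_of_nonneg_right h0 hp.le
    rw [pow_succ]
    linarith

theorem digit_floor (d q : ℕ) (hd : 2 ≤ d) (hq : 1 ≤ q) (a : ZMod q → ℕ) (ha : ∀ i, a i < d)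
    (hra : IsRotationalSet d (sigmaOrbit d (tuplePoint d q a))) :
    (a 0 : ℝ) < d * tuplePoint d q a ∧ (d:ℝ) * tuplePoint d q a < a 0 + 1 := by
  have hz := zero_notMem_rot d _ hra
  have hx0 : tuplePoint d q a ≠ 0 := fun h => hz ⟨0, by simpa using h⟩
  have hx1 : sigmad d (tuplePoint d q a) ≠ 0 := fun h => hz ⟨1, by simpa using h⟩
  obtain ⟨n, rfl⟩ : ∃ n, q = n + 1 := ⟨q - 1, by omega⟩
  have hd' : (2:ℝ) ≤ d := by exact_mod_cast hd
  have hD : (0:ℝ) < (d:ℝ) ^ (n + 1) - 1 := by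
    have := one_lt_pow₀ (a := (d:ℝ)) (by linarith) (n := n + 1) (by omega)
    linarith
  have hS := digit_sum_le d hd (n + 1) (fun i => a (i : ZMod (n + 1))) (fun i => ha _)
  have hR := digit_sum_le d hd n (fun i => a ((i + 1 : ℕ) : ZMod (n + 1))) (fun i => ha _)
  have hR0 : 0 ≤ ∑ i ∈ Finset.range n, (a ((i + 1 : ℕ) : ZMod (n + 1)) : ℝ) * (d:ℝ) ^ (n - 1 - i) :=
    Finset.sum_nonneg fun i _ => by positivity
  have hSR : ∑ i ∈ Finset.range (n + 1), (a (i : ZMod (n + 1)) : ℝ) * (d:ℝ) ^ (n + 1 - 1 - i)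
      = ∑ i ∈ Finset.range n, (a ((i + 1 : ℕ) : ZMod (n + 1)) : ℝ) * (d:ℝ) ^ (n - 1 - i)
        + a 0 * (d:ℝ) ^ n := by
    rw [Finset.sum_range_succ']
    have e : ∀ i, n + 1 - 1 - (i + 1) = n - 1 - i := fun i => by omega
    simp only [e]
    simp
  have h0 : (a 0 : ℝ) ≤ d - 1 := by
    have := ha 0
    have : (a 0 : ℝ) + 1 ≤ d := by exact_mod_cast this
    linarith
  have ha0 : (0:ℝ) ≤ a 0 := by positivity
  unfold tuplePoint at hx0 hx1 ⊢
  rw [hSR] at hS hx0 hx1 ⊢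
  generalize (∑ i ∈ Finset.range n, (a ((i + 1 : ℕ) : ZMod (n + 1)) : ℝ) * (d:ℝ) ^ (n - 1 - i)) = R at *
  have hpp : (0:ℝ) < (d:ℝ) ^ n := by positivity
  have hps : (d:ℝ) ^ (n + 1) = d ^ n * d := pow_succ _ _
  have hlt : 0 ≤ (R + (a 0 : ℝ) * (d:ℝ) ^ n) / ((d:ℝ) ^ (n + 1) - 1) := by positivity
  have hle : (R + (a 0 : ℝ) * (d:ℝ) ^ n) / ((d:ℝ) ^ (n + 1) - 1) ≤ 1 := by
    rw [div_le_one hD]; exact hS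
  have hlt1 : (R + (a 0 : ℝ) * (d:ℝ) ^ n) / ((d:ℝ) ^ (n + 1) - 1) < 1 := by
    refine lt_of_le_of_ne hle fun h => hx0 ?_
    rw [h]; simp
  rw [Int.fract_eq_self.mpr ⟨hlt, hlt1⟩] at hx1 ⊢
  have key : (d:ℝ) * ((R + (a 0 : ℝ) * (d:ℝ) ^ n) / ((d:ℝ) ^ (n + 1) - 1))
      = a 0 + (a 0 + d * R) / ((d:ℝ) ^ (n + 1) - 1) := by
    field_simp
    rw [hps]; ring
  unfold sigmad at hx1
  rw [key] at hx1 ⊢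
  have e0 : 0 ≤ (a 0 + d * R) / ((d:ℝ) ^ (n + 1) - 1) := by positivity
  have e1 : (a 0 + d * R) / ((d:ℝ) ^ (n + 1) - 1) ≤ 1 := by
    rw [div_le_one hD, hps]
    nlinarith
  have e2 : (a 0 + d * R) / ((d:ℝ) ^ (n + 1) - 1) ≠ 0 := fun h => hx1 (by rw [h]; simp)
  have e3 : (a 0 + d * R) / ((d:ℝ) ^ (n + 1) - 1) ≠ 1 := fun h => hx1 (by
    rw [h]; simp)
  have := lt_of_le_of_ne e0 e2.symm
  have := lt_of_le_of_ne e1 e3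
  constructor <;> linarith

theorem stmt4 (d q : ℕ) (hd : 2 ≤ d) (hq : 1 ≤ q)
    (a b : ZMod q → ℕ) (ha : ∀ i, a i < d) (hb : ∀ i, b i < d)
    (hne : tuplePoint d q a ≠ tuplePoint d q b)
    (hra : IsRotationalSet d (sigmaOrbit d (tuplePoint d q a)))
    (hrb : IsRotationalSet d (sigmaOrbit d (tuplePoint d q b))) :
    a 0 < b 0 ↔
      ∃ r : ℝ, r ∈ Set.Ico (0:ℝ) 1 ∧
        tuplePoint d q a < r ∧ r < tuplePoint d q b ∧ sigmad d r = 0 := by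
  obtain ⟨a1, a2⟩ := digit_floor d q hd hq a ha hra
  obtain ⟨b1, b2⟩ := digit_floor d q hd hq b hb hrb
  have hd0 : (0:ℝ) < d := by positivity
  constructor
  · intro h
    have h' : (a 0 : ℝ) + 1 ≤ b 0 := by exact_mod_cast h
    have hbd : (b 0 : ℝ) < d := by exact_mod_cast hb 0
    refine ⟨(b 0 : ℝ) / d, ⟨by positivity, by rw [div_lt_one hd0]; exact hbd⟩, ?_, ?_, ?_⟩
    · rw [lt_div_iff₀ hd0]; linarith
    · rw [div_lt_iff₀ hd0]; linarith
    · unfold sigmad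
      rw [mul_div_cancel₀ _ hd0.ne']
      simp
  · rintro ⟨r, ⟨hr0, hr1⟩, h1, h2, h3⟩
    have h4 : ((⌊(d:ℝ) * r⌋ : ℤ) : ℝ) = d * r := by
      have := Int.floor_add_fract ((d:ℝ) * r)
      unfold sigmad at h3
      linarith
    have h5 := mul_lt_mul_of_pos_left h1 hd0
    have h6 := mul_lt_mul_of_pos_left h2 hd0
    have h7 : ((a 0 : ℤ) : ℝ) < (⌊(d:ℝ) * r⌋ : ℤ) := by rw [h4]; push_cast; linarith
    have h8 : ((⌊(d:ℝ) * r⌋ : ℤ) : ℝ) < ((b 0 : ℤ) : ℝ) + 1 := by rw [h4]; push_cast; linarith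
    have h7' : (a 0 : ℤ) < ⌊(d:ℝ) * r⌋ := by exact_mod_cast h7
    have h8' : ⌊(d:ℝ) * r⌋ < (b 0 : ℤ) + 1 := by exact_mod_cast h8
    omega
end

section
/- Fix d ≥ 2 and a fraction p/q in lowest terms with q ≥ 2, 1 ≤ p ≤ q−1, gcd(p,q) = 1, and let p* be the multiplicative inverse of p in ℤ/qℤ. For 1 ≤ i ≤ n let O_i be the orbit under σ_d of the point t_i = (a_0^{(i)}, a_1^{(i)}, ..., a_{q-1}^{(i)}) (a q-tuple of digits in {0,...,d−1}), with |O_i| = q, the orbits O_1, ..., O_n pairwise distinct, and t_1 < t_2 < ... < t_n. Then [each t_i is the least element of O_i, and A = O_1 ∪ ... ∪ O_n is σ_d-rotational with rotation number p/q] if and only if the interleaved sequence a_0^{(1)}, a_0^{(2)}, ..., a_0^{(n)}, a_{p*}^{(1)}, ..., a_{p*}^{(n)}, a_{2p*}^{(1)}, ..., a_{2p*}^{(n)}, ..., a_{(q-1)p*}^{(1)}, ..., a_{(q-1)p*}^{(n)} (digit indices computed in ℤ/qℤ) is nondecreasing and moreover a_{-(p+1)p*}^{(n)} < a_{-p·p*}^{(1)}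 (indices in ℤ/qℤ). -/
/-- The value of the repeating expansion shifted by `m`, without reduction mod 1. -/
noncomputable def shiftVal (d q : ℕ) (a : ZMod q → ℕ) (m : ZMod q) : ℝ :=
  (∑ i ∈ Finset.range q, (a ((i : ZMod q) + m) : ℝ) * (d : ℝ) ^ (q - 1 - i)) /
    ((d : ℝ) ^ q - 1)

lemma tuplePoint_eq (d q : ℕ) (a : ZMod q → ℕ) :
    tuplePoint d q a = Int.fract (shiftVal d q a 0) := by
  simp [tuplePoint, shiftVal]

lemma dpow_pos {d q : ℕ} (hd : 2 ≤ d) (hq : 2 ≤ q) : (0:ℝ) < (d:ℝ) ^ q - 1 := by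
  have h : (1:ℝ) < d := by exact_mod_cast (by omega : 1 < d)
  have := one_lt_pow₀ h (by omega : q ≠ 0)
  linarith

lemma shiftVal_rec {d q : ℕ} (hd : 2 ≤ d) (hq : 2 ≤ q) (a : ZMod q → ℕ) (m : ZMod q) :
    (d:ℝ) * shiftVal d q a m = a m + shiftVal d q a (m + 1) := by
  have hpos := dpow_pos hd hq
  have key : (d:ℝ) * (∑ i ∈ Finset.range q, (a ((i : ZMod q) + m) : ℝ) * (d : ℝ) ^ (q - 1 - i))
      = a m * ((d:ℝ)^q - 1) +
        (∑ i ∈ Finset.range q, (a ((i : ZMod q) + (m + 1)) : ℝ) * (d : ℝ) ^ (q - 1 - i)) := by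
    obtain ⟨r, rfl⟩ : ∃ r, q = r + 1 := ⟨q - 1, by omega⟩
    rw [Finset.sum_range_succ', Finset.sum_range_succ]
    have e : ((r : ZMod (r+1)) + (m + 1)) = m := by
      have : ((r + 1 : ℕ) : ZMod (r+1)) = 0 := ZMod.natCast_self _
      push_cast at this
      linear_combination this
    rw [e, mul_add, Finset.mul_sum]
    have : ∀ i ∈ Finset.range r, (d:ℝ) * ((a (((i + 1 : ℕ) : ZMod (r+1)) + m) : ℝ) *
        (d : ℝ) ^ (r + 1 - 1 - (i + 1))) =
        (a ((i : ZMod (r+1)) + (m + 1)) : ℝ) * (d : ℝ) ^ (r + 1 - 1 - i) := by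
      intro i hi
      have hi := Finset.mem_range.1 hi
      have h1 : (((i + 1 : ℕ) : ZMod (r+1)) + m) = (i : ZMod (r+1)) + (m + 1) := by
        push_cast; ring
      have h2 : r + 1 - 1 - i = (r + 1 - 1 - (i + 1)) + 1 := by omega
      rw [h1, h2, pow_succ]; ring
    rw [Finset.sum_congr rfl this]
    simp
    ring
  unfold shiftVal
  field_simp
  linear_combination key

lemma shiftVal_nonneg {d q : ℕ} (hd : 2 ≤ d) (hq : 2 ≤ q) (a : ZMod q → ℕ) (m : ZMod q) :
    0 ≤ shiftVal d q a m := by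
  have hpos := dpow_pos hd hq
  unfold shiftVal
  positivity

lemma shiftVal_le_one {d q : ℕ} (hd : 2 ≤ d) (hq : 2 ≤ q) (a : ZMod q → ℕ)
    (ha : ∀ j, a j < d) (m : ZMod q) : shiftVal d q a m ≤ 1 := by
  have : NeZero q := ⟨by omega⟩
  obtain ⟨x, hx⟩ := Finite.exists_max (shiftVal d q a)
  have h := shiftVal_rec hd hq a x
  have h1 := hx (x + 1)
  have h2 : (a x : ℝ) + 1 ≤ d := by exact_mod_cast ha x
  have h3 : (2:ℝ) ≤ d := by exact_mod_cast hd
  refine (hx m).trans ?_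
  nlinarith

lemma iter_zero (d k : ℕ) : (sigmad d)^[k] 0 = 0 := by
  induction k with
  | zero => rfl
  | succ k ih => rw [Function.iterate_succ_apply', ih]; simp [sigmad]

lemma shiftVal_lt_one {d q : ℕ} (hd : 2 ≤ d) (hq : 2 ≤ q) (a : ZMod q → ℕ)
    (ha : ∀ j, a j < d) (hs : (sigmaOrbit d (tuplePoint d q a)).ncard = q) (m : ZMod q) :
    shiftVal d q a m < 1 := by
  have : NeZero q := ⟨by omega⟩
  by_contra hcon
  have hm : shiftVal d q a m = 1 := le_antisymm (shiftVal_le_one hd hq a ha m) (not_lt.1 hcon)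
  have step : ∀ k : ℕ, shiftVal d q a (m + k) = 1 := by
    intro k
    induction k with
    | zero => simpa using hm
    | succ k ih =>
      have h := shiftVal_rec hd hq a (m + k)
      rw [ih] at h
      have h2 : (a (m + k) : ℝ) + 1 ≤ d := by exact_mod_cast ha (m + k)
      have h3 := shiftVal_le_one hd hq a ha (m + k + 1)
      push_cast
      rw [← add_assoc]
      linarith
  have h0 := step (-m).val
  rw [ZMod.natCast_zmod_val, add_neg_cancel] at h0
  have ht : tuplePoint d q a = 0 := by rw [tuplePoint_eq, h0]; simp
  have : sigmaOrbit d (tuplePoint d q a) = {0} := by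
    rw [ht]
    ext x
    simp [sigmaOrbit, iter_zero, eq_comm]
  rw [this, Set.ncard_singleton] at hs
  omega

lemma sigmad_of_eq {d : ℕ} {x y : ℝ} {b : ℕ} (h : (d:ℝ) * x = b + y) (h0 : 0 ≤ y) (h1 : y < 1) :
    sigmad d x = y := by
  unfold sigmad
  rw [h, Int.fract_natCast_add, Int.fract_eq_self.2 ⟨h0, h1⟩]

lemma period_mod {α : Type*} {f : ℕ → α} {N : ℕ} (hf : ∀ j, f (j + N) = f j) (x : ℕ) :
    f (x % N) = f x := by
  have : Function.Periodic f N := hf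
  exact this.map_mod_nat x

/-- the monotonicity argument -/
lemma step_le {d N s : ℕ} (hd : 2 ≤ d) (hs : s < N) (hs0 : 0 < s) (u : ℕ → ℝ) (b : ℕ → ℕ)
    (hper : ∀ j, u (j + N) = u j) (hu0 : ∀ j, 0 ≤ u j) (hu1 : ∀ j, u j < 1)
    (hrec : ∀ j, (d:ℝ) * u j = b j + u (j + s))
    (hb : ∀ j, j + 1 < N → b j ≤ b (j + 1)) (hb' : b (N - s - 1) < b (N - s))
    (j : ℕ) (hj : j + 1 < N) : u j ≤ u (j + 1) := by
  have hne : (Finset.range (N - 1)).Nonempty := ⟨j, by simp; omega⟩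
  obtain ⟨x, hx, hmax⟩ := Finset.exists_max_image _ (fun j => u j - u (j + 1)) hne
  simp only [Finset.mem_range] at hx hmax
  have hxj := hmax j (by omega)
  by_contra hcon
  have hM : 0 < u x - u (x + 1) := by linarith [not_le.1 hcon]
  have h1 := hrec x
  have h2 := hrec (x + 1)
  have hd' : (2:ℝ) ≤ d := by exact_mod_cast hd
  have hbx := hb x (by omega)
  rcases hbx.lt_or_eq with hlt | heq
  · have hlt' : (b x : ℝ) + 1 ≤ b (x + 1) := by exact_mod_cast hlt
    have := hu1 (x + s)
    have := hu0 (x + 1 + s)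
    nlinarith
  · have hxs : x ≠ N - s - 1 := by
      rintro rfl
      rw [show N - s - 1 + 1 = N - s by omega] at heq
      omega
    have hle : u (x + s) - u (x + s + 1) ≤ u x - u (x + 1) := by
      rcases lt_or_ge (x + s) N with h | h
      · exact hmax (x + s) (by omega)
      · have := hmax (x + s - N) (by omega)
        rw [← hper (x + s - N), ← hper (x + s - N + 1)] at this
        rwa [show x + s - N + N = x + s by omega,
          show x + s - N + 1 + N = x + s + 1 by omega] at this
    rw [show x + 1 + s = x + s + 1 by ring] at h2
    rw [← heq] at h2
    nlinarith

lemma chain_lt {N : ℕ} (u : ℕ → ℝ) (h : ∀ j, j + 1 < N → u j < u (j + 1)) (i j : ℕ)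
    (hij : i < j) (hj : j < N) : u i < u j := by
  induction j with
  | zero => omega
  | succ j ih =>
    rcases Nat.lt_succ_iff_lt_or_eq.1 hij with h1 | rfl
    · exact (ih h1 (by omega)).trans (h j hj)
    · exact h _ hj

lemma orbit_eq {d q : ℕ} (hd : 2 ≤ d) (hq : 2 ≤ q) (a : ZMod q → ℕ)
    (ha : ∀ j, a j < d) (hs : (sigmaOrbit d (tuplePoint d q a)).ncard = q) :
    tuplePoint d q a = shiftVal d q a 0 ∧
    (∀ (k : ℕ) m, (sigmad d)^[k] (shiftVal d q a m) = shiftVal d q a (m + k)) ∧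
    sigmaOrbit d (tuplePoint d q a) = Set.range (shiftVal d q a) ∧
    Function.Injective (shiftVal d q a) := by
  have : NeZero q := ⟨by omega⟩
  have h0 := shiftVal_nonneg hd hq a
  have h1 := shiftVal_lt_one hd hq a ha hs
  have ht : tuplePoint d q a = shiftVal d q a 0 := by
    rw [tuplePoint_eq, Int.fract_eq_self.2 ⟨h0 _, h1 _⟩]
  have hit : ∀ (k : ℕ) m, (sigmad d)^[k] (shiftVal d q a m) = shiftVal d q a (m + k) := by
    intro k m
    induction k with
    | zero => simp
    | succ k ih =>
      rw [Function.iterate_succ_apply', ih,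
        sigmad_of_eq (shiftVal_rec hd hq a _) (h0 _) (h1 _)]
      push_cast
      rw [add_assoc]
  have ho : sigmaOrbit d (tuplePoint d q a) = Set.range (shiftVal d q a) := by
    ext x
    simp only [sigmaOrbit, Set.mem_ofPred_eq, Set.mem_range, ht, hit, zero_add]
    constructor
    · rintro ⟨k, hk⟩; exact ⟨_, hk⟩
    · rintro ⟨m, hm⟩; exact ⟨m.val, by rw [ZMod.natCast_zmod_val]; exact hm⟩
  refine ⟨ht, hit, ho, ?_⟩
  rw [ho] at hs
  classical
  have h2 : (Finset.univ.image (shiftVal d q a)).card = (Finset.univ : Finset (ZMod q)).card := by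
    rw [Finset.card_univ, ZMod.card]
    rw [← Set.ncard_coe_finset]
    simpa using hs
  have := Finset.card_image_iff.1 h2
  intro x y hxy
  exact this (by simp) (by simp) hxy

theorem stmt8 (d q p n : ℕ) (hd : 2 ≤ d) (hq : 2 ≤ q)
    (hp1 : 1 ≤ p) (hp2 : p ≤ q - 1) (hpq : Nat.gcd p q = 1) (hn : 1 ≤ n)
    -- the digits `a_j^{(i)}` of the points `t_i = tuplePoint d q (a i)`, `1 ≤ i ≤ n`
    -- (here `0 ≤ i ≤ n-1`)
    (a : ℕ → ZMod q → ℕ) (ha : ∀ i < n, ∀ j, a i j < d)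
    -- each orbit `O_i` has size `q`
    (hsize : ∀ i < n, (sigmaOrbit d (tuplePoint d q (a i))).ncard = q)
    -- the orbits are pairwise distinct
    (hdist : ∀ i < n, ∀ j < n, i ≠ j →
      sigmaOrbit d (tuplePoint d q (a i)) ≠ sigmaOrbit d (tuplePoint d q (a j)))
    -- `t_1 < t_2 < ⋯ < t_n`
    (hinc : ∀ i < n, ∀ j < n, i < j → tuplePoint d q (a i) < tuplePoint d q (a j)) :
    -- LHS: each `t_i` is the least element of `O_i`, and `A = O_1 ∪ ⋯ ∪ O_n` is
    -- `σ_d`-rotational with rotation number `p/q` in lowest terms, i.e. rotation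
    -- number `np/(nq)` for its `nq` elements
    ((∀ i < n, ∀ x ∈ sigmaOrbit d (tuplePoint d q (a i)), tuplePoint d q (a i) ≤ x) ∧
      ∃ u : ZMod (n * q) → ℝ,
        Set.range u = (⋃ i ∈ Finset.range n, sigmaOrbit d (tuplePoint d q (a i))) ∧
        IsRotational d (n * q) ((n * p : ℕ) : ZMod (n * q)) u) ↔
    -- RHS: the interleaved sequence (position `j = k·n + i` carries the digit
    -- `a^{(i+1)}_{k·p*}`) is nondecreasing, and `a^{(n)}_{-(p+1)p*} < a^{(1)}_{-p·p*}`
    ((∀ j : ℕ, j + 1 < n * q →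
        a (j % n) (((j / n : ℕ) : ZMod q) * ((p : ZMod q))⁻¹) ≤
        a ((j + 1) % n) ((((j + 1) / n : ℕ) : ZMod q) * ((p : ZMod q))⁻¹)) ∧
      a (n - 1) ((-((p : ZMod q) + 1)) * ((p : ZMod q))⁻¹) <
        a 0 ((-(p : ZMod q)) * ((p : ZMod q))⁻¹)) := by
  have : NeZero q := ⟨by omega⟩
  have hN : 2 ≤ n * q := by nlinarith
  have : NeZero (n * q) := ⟨by omega⟩
  have hpp : (p : ZMod q) * (p : ZMod q)⁻¹ = 1 := ZMod.coe_mul_inv_eq_one p hpq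
  have O := fun i (hi : i < n) => orbit_eq hd hq (a i) (ha i hi) (hsize i hi)
  set b : ℕ → ℕ := fun j => a (j % n) (((j / n : ℕ) : ZMod q) * ((p : ZMod q))⁻¹) with hb
  set u : ℕ → ℝ := fun j => shiftVal d q (a (j % n)) (((j / n : ℕ) : ZMod q) * ((p : ZMod q))⁻¹)
    with hu
  have hmod : ∀ j, j % n < n := fun j => Nat.mod_lt _ (by omega)
  have hu0 : ∀ j, 0 ≤ u j := fun j => shiftVal_nonneg hd hq _ _
  have hu1 : ∀ j, u j < 1 := fun j =>
    shiftVal_lt_one hd hq _ (ha _ (hmod j)) (hsize _ (hmod j)) _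
  have hdivmul : ∀ j k, (j + n * k) / n = j / n + k := fun j k =>
    Nat.add_mul_div_left _ _ (by omega)
  have hper : ∀ j, u (j + n * q) = u j := by
    intro j
    simp only [hu, hdivmul, Nat.add_mul_mod_self_left]
    simp
  have hrec : ∀ j, (d:ℝ) * u j = b j + u (j + n * p) := by
    intro j
    simp only [hu, hb, hdivmul, Nat.add_mul_mod_self_left]
    rw [shiftVal_rec hd hq]
    congr 2
    push_cast
    rw [add_mul, hpp]
  have hsig : ∀ j, sigmad d (u j) = u (j + n * p) := fun j =>
    sigmad_of_eq (hrec j) (hu0 _) (hu1 _)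
  have hsigk : ∀ k j, (sigmad d)^[k] (u j) = u (j + n * p * k) := by
    intro k j
    induction k with
    | zero => simp
    | succ k ih => rw [Function.iterate_succ_apply', ih, hsig]; congr 1; ring
  have hui : ∀ i < n, u i = tuplePoint d q (a i) := by
    intro i hi
    rw [(O i hi).1]
    simp only [hu, Nat.mod_eq_of_lt hi, Nat.div_eq_of_lt hi]
    simp
  -- solving `l p ≡ k`
  have hsol : ∀ k : ℕ, ∃ l : ℕ, n * p * l ≡ n * k [MOD n * q] := by
    intro k
    refine ⟨((k : ZMod q) * (p : ZMod q)⁻¹).val, ?_⟩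
    rw [mul_assoc]
    apply Nat.ModEq.mul_left'
    rw [← ZMod.natCast_eq_natCast_iff]
    push_cast
    rw [ZMod.natCast_zmod_val]
    linear_combination (k : ZMod q) * hpp
  have hnp : n * p < n * q := by
    apply Nat.mul_lt_mul_of_pos_left <;> omega
  have hnp0 : 0 < n * p := by positivity
  have hj1 : n * q - n * p = n * (q - p) := by rw [Nat.mul_sub]
  have hj2 : n * q - n * p - 1 = (n - 1) + n * (q - p - 1) := by
    rw [hj1]
    obtain ⟨r, hr⟩ : ∃ r, q - p = r + 1 := ⟨q - p - 1, by omega⟩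
    rw [hr, Nat.mul_add, Nat.add_sub_cancel]; omega
  have hB1 : b (n * q - n * p) = a 0 ((-(p : ZMod q)) * ((p : ZMod q))⁻¹) := by
    simp only [hb, hj1, Nat.mul_mod_right, Nat.mul_div_cancel_left _ (show 0 < n by omega)]
    rw [Nat.cast_sub (by omega)]
    simp
  have hB2 : b (n * q - n * p - 1) =
      a (n - 1) ((-((p : ZMod q) + 1)) * ((p : ZMod q))⁻¹) := by
    simp only [hb, hj2, hdivmul, Nat.add_mul_mod_self_left]
    rw [Nat.mod_eq_of_lt (by omega), Nat.div_eq_of_lt (by omega), zero_add,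
      Nat.cast_sub (by omega), Nat.cast_sub (by omega)]
    simp only [ZMod.natCast_self]
    congr 2
    push_cast
    ring
  rw [← hB1, ← hB2]
  change _ ↔ ((∀ j, j + 1 < n * q → b j ≤ b (j + 1)) ∧ _)
  have hmem : ∀ j, u j ∈ sigmaOrbit d (tuplePoint d q (a (j % n))) := by
    intro j
    rw [(O _ (hmod j)).2.2.1]
    exact ⟨_, rfl⟩
  constructor
  · rintro ⟨hmin, w, hrange, hw01, hwmono, -, hwsig⟩
    set W : ℕ → ℝ := fun j => w (j : ZMod (n * q)) with hW
    have hWper : ∀ j, W (j + n * q) = W j := by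
      intro j; simp only [hW]; congr 1
      rw [Nat.cast_add, ZMod.natCast_self, add_zero]
    have hWcongr : ∀ {x y : ℕ}, x ≡ y [MOD n * q] → W x = W y := by
      intro x y h
      simp only [hW]
      rw [(ZMod.natCast_eq_natCast_iff _ _ _).2 h]
    have hWmono : ∀ i j, i < j → j < n * q → W i < W j := by
      intro i j hij hj
      apply hwmono
      rwa [ZMod.val_natCast_of_lt hj, ZMod.val_natCast_of_lt (hij.trans hj)]
    have hWsig : ∀ k j, (sigmad d)^[k] (W j) = W (j + n * p * k) := by
      intro k j
      induction k with
      | zero => simp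
      | succ k ih =>
        rw [Function.iterate_succ_apply', ih]
        simp only [hW]
        rw [hwsig, ← Nat.cast_add]
        congr 2; ring
    have hex : ∀ i : Fin n, ∃ j : Fin n, W j = u i := by
      intro i
      have h1 : u i ∈ Set.range w := by
        rw [hrange]
        simp only [Set.mem_iUnion, Finset.mem_range]
        refine ⟨i, i.2, ?_⟩
        have := hmem i
        rwa [Nat.mod_eq_of_lt i.2] at this
      obtain ⟨x, hx⟩ := h1
      have hx' : W x.val = u i := by simp only [hW]; rw [ZMod.natCast_zmod_val, hx]
      have hxlt := ZMod.val_lt x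
      refine ⟨⟨x.val % n, hmod _⟩, ?_⟩
      have hdm := Nat.mod_add_div x.val n
      have hkq : x.val / n < q := by
        rw [Nat.div_lt_iff_lt_mul (by omega)]; exact hxlt.trans_eq (mul_comm n q)
      obtain ⟨l, hl⟩ := hsol (q - x.val / n)
      have h2 : W (x.val % n) = (sigmad d)^[l] (u i) := by
        rw [← hx', hWsig, ← hWper]
        apply hWcongr
        have h3 := (Nat.ModEq.add_left x.val hl).symm
        convert h3 using 1
        have : n * q = n * (x.val / n) + n * (q - x.val / n) := by
          rw [← Nat.mul_add]; congr 1; omega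
        omega
      have h3 : u i ≤ W (x.val % n) := by
        rw [h2, hui i i.2]
        exact hmin i i.2 _ ⟨l, rfl⟩
      have h4 : x.val % n ≤ x.val := Nat.mod_le _ _
      rcases h4.lt_or_eq with h5 | h5
      · have := hWmono _ _ h5 hxlt
        linarith
      · simp only [h5, hx']
    choose J hJ using hex
    have hJm : StrictMono J := by
      intro i i' hii
      have h1 : u i < u i' := by
        rw [hui i i.2, hui i' i'.2]; exact hinc _ i.2 _ i'.2 hii
      rw [← hJ, ← hJ] at h1
      by_contra hcon
      rcases (not_lt.1 hcon).lt_or_eq with h2 | h2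
      · have := hWmono (J i') (J i) h2 ((J i).2.trans_le (Nat.le_mul_of_pos_right _ (by omega)))
        linarith
      · rw [h2] at h1; exact lt_irrefl _ h1
    have hJid : ∀ i, J i = i := by
      intro i
      have h1 : StrictMono.orderIsoOfSurjective J hJm
          (Finite.injective_iff_surjective.1 hJm.injective) = OrderIso.refl _ :=
        Subsingleton.elim _ _
      exact congrArg (fun f : Fin n ≃o Fin n => f i) h1
    have hbase : ∀ i < n, W i = u i := by
      intro i hi
      have := hJ ⟨i, hi⟩
      rwa [hJid] at this
    have hucongr : ∀ {x y : ℕ}, x ≡ y [MOD n * q] → u x = u y := by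
      intro x y h
      rw [← period_mod hper x, ← period_mod hper y, h]
    have hall : ∀ j, W j = u j := by
      intro j
      obtain ⟨l, hl⟩ := hsol (j / n)
      have h3 := Nat.ModEq.add_left (j % n) hl
      rw [Nat.mod_add_div] at h3
      rw [← hWcongr h3, ← hucongr h3, ← hWsig, ← hsigk, hbase _ (hmod j)]
    have humono : ∀ i j, i < j → j < n * q → u i < u j := by
      intro i j h1 h2
      rw [← hall, ← hall]; exact hWmono i j h1 h2
    have hd' : (2:ℝ) ≤ d := by exact_mod_cast hd
    constructor
    · intro j hj
      by_contra hcon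
      have h1 : (b (j + 1) : ℝ) + 1 ≤ b j := by exact_mod_cast not_le.1 hcon
      have h2 := humono j (j + 1) (by omega) hj
      have h3 := hrec j
      have h4 := hrec (j + 1)
      have h5 := hu0 (j + n * p)
      have h6 := hu1 (j + 1 + n * p)
      nlinarith
    · by_contra hcon
      have h1 : (b (n * q - n * p) : ℝ) ≤ b (n * q - n * p - 1) := by
        exact_mod_cast not_lt.1 hcon
      have h2 := humono (n * q - n * p - 1) (n * q - n * p) (by omega) (by omega)
      have h3 := hrec (n * q - n * p - 1)
      have h4 := hrec (n * q - n * p)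
      rw [show n * q - n * p + n * p = 0 + n * q by omega, hper] at h4
      rw [show n * q - n * p - 1 + n * p = n * q - 1 by omega] at h3
      have h5 := humono 0 (n * q - 1) (by omega) (by omega)
      nlinarith
  · rintro ⟨hb1, hb2⟩
    have hle := step_le hd hnp hnp0 u b hper hu0 hu1 hrec hb1 hb2
    have hinj : ∀ j, j + 1 < n * q → u j ≠ u (j + 1) := by
      intro j hj heq
      have h1 := O _ (hmod j)
      have h2 := O _ (hmod (j + 1))
      have hii : j % n = (j + 1) % n := by
        by_contra hne
        apply hdist _ (hmod j) _ (hmod (j + 1)) hne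
        have hsub : ∀ k, (sigmad d)^[k] (u j) = (sigmad d)^[k] (u (j + 1)) := by
          intro k; rw [heq]
        simp only [hu, h1.2.1, h2.2.1] at hsub
        rw [h1.2.2.1, h2.2.2.1]
        apply Set.Subset.antisymm
        · rintro _ ⟨m, rfl⟩
          have := hsub (m - ((j / n : ℕ) : ZMod q) * ((p : ZMod q))⁻¹).val
          rw [ZMod.natCast_zmod_val, add_sub_cancel] at this
          exact ⟨_, this.symm⟩
        · rintro _ ⟨m, rfl⟩
          have := hsub (m - (((j + 1) / n : ℕ) : ZMod q) * ((p : ZMod q))⁻¹).val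
          rw [ZMod.natCast_zmod_val, add_sub_cancel] at this
          exact ⟨_, this⟩
      have h3 : (((j / n : ℕ) : ZMod q) * ((p : ZMod q))⁻¹) =
          ((((j + 1) / n : ℕ) : ZMod q) * ((p : ZMod q))⁻¹) := by
        apply h1.2.2.2
        simp only [hu, ← hii] at heq
        exact heq
      have h4 : ((j / n : ℕ) : ZMod q) = (((j + 1) / n : ℕ) : ZMod q) := by
        have := congrArg (fun x => x * (p : ZMod q)) h3
        simp only [mul_assoc, mul_comm ((p : ZMod q)⁻¹), hpp, mul_one] at this
        exact this
      rw [ZMod.natCast_eq_natCast_iff] at h4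
      have h5 : j / n < q := by
        rw [Nat.div_lt_iff_lt_mul (by omega), mul_comm]; omega
      have h6 : (j + 1) / n < q := by
        rw [Nat.div_lt_iff_lt_mul (by omega), mul_comm]; omega
      have h7 := Nat.ModEq.eq_of_lt_of_lt h4 h5 h6
      have h8 := Nat.mod_add_div j n
      have h9 := Nat.mod_add_div (j + 1) n
      rw [← hii, ← h7] at h9
      omega
    have hlt := chain_lt u (fun j hj => lt_of_le_of_ne (hle j hj) (hinj j hj))
    have hucongr : ∀ {x y : ℕ}, x ≡ y [MOD n * q] → u x = u y := by
      intro x y h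
      rw [← period_mod hper x, ← period_mod hper y, h]
    -- every orbit point is some `u (i + n k)`
    have horb : ∀ i < n, ∀ x ∈ sigmaOrbit d (tuplePoint d q (a i)),
        ∃ j < n * q, i ≤ j ∧ u j = x := by
      rintro i hi x ⟨k, rfl⟩
      rw [← hui i hi, hsigk]
      refine ⟨(i + n * p * k) % (n * q), Nat.mod_lt _ (by omega), ?_, period_mod hper _⟩
      have : ((i + n * p * k) % (n * q)) % n = i := by
        rw [Nat.mod_mul_right_mod, mul_assoc, Nat.add_mul_mod_self_left, Nat.mod_eq_of_lt hi]
      calc i = ((i + n * p * k) % (n * q)) % n := this.symm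
        _ ≤ _ := Nat.mod_le _ _
    refine ⟨?_, fun x => u x.val, ?_, ?_, ?_, ?_, ?_⟩
    · intro i hi x hx
      obtain ⟨j, hj, hij, rfl⟩ := horb i hi x hx
      rw [← hui i hi]
      rcases hij.lt_or_eq with h | h
      · exact (hlt _ _ h hj).le
      · rw [h]
    · ext x
      simp only [Set.mem_range, Set.mem_iUnion, Finset.mem_range]
      constructor
      · rintro ⟨y, rfl⟩
        exact ⟨_, hmod _, hmem _⟩
      · rintro ⟨i, hi, hx⟩
        obtain ⟨j, hj, -, rfl⟩ := horb i hi x hx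
        exact ⟨(j : ZMod (n * q)), by rw [ZMod.val_natCast_of_lt hj]⟩
    · intro i; exact ⟨hu0 _, hu1 _⟩
    · intro i j hij; exact hlt _ _ hij (ZMod.val_lt j)
    · intro h
      rw [ZMod.natCast_eq_zero_iff] at h
      exact absurd (Nat.le_of_dvd hnp0 h) (by omega)
    · intro i
      rw [hsig]
      apply hucongr
      rw [← ZMod.natCast_eq_natCast_iff, Nat.cast_add, ZMod.natCast_zmod_val,
        ZMod.natCast_zmod_val]
end

section
/- Fix d ≥ 2 and a fraction p/q in lowest terms with q ≥ 2, 1 ≤ p ≤ q−1, gcd(p,q) = 1. The map sending a σ_d-rotational orbit with rotation number p/q to its representative sequence is a bijection onto the set of all (d−1)-sequences of length q. In particular, the number of σ_d-rotational orbits with rotation number p/q equals the binomial coefficient C(d−2+q, d−2). -/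
/-- The `k`-th term (`0 ≤ k ≤ q-1`) of the representative sequence of the rotational orbit
whose least element has digits `a`: it is `a_{kp*}` for `0 ≤ k ≤ q-p-1` and
`a_{kp*} - 1` for `q-p ≤ k ≤ q-1`. -/
def repDigit (q p : ℕ) (a : ZMod q → ℕ) (k : ℕ) : ℕ :=
  if k ≤ q - p - 1 then a ((k : ZMod q) * ((p : ZMod q))⁻¹)
  else a ((k : ZMod q) * ((p : ZMod q))⁻¹) - 1

theorem rot_fin_strictMono_gap {q : ℕ} {e : Fin q → ℕ} (he : StrictMono e) :
    ∀ (m : ℕ) (i j : Fin q), i.val + m = j.val → e i + m ≤ e j := by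
  intro m
  induction m with
  | zero =>
    intro i j h
    have : i = j := Fin.ext (by simpa using h)
    simp [this]
  | succ m ih =>
    intro i j h
    have hj := j.isLt
    have h1 := ih i ⟨i.val + m, by omega⟩ rfl
    have h2 : e ⟨i.val + m, by omega⟩ < e j := he (by rw [Fin.lt_def]; simp; omega)
    omega

theorem rot_card_seq (m q : ℕ) (hq : 1 ≤ q) :
    Nat.card {s : Fin q → ℕ // Monotone s ∧ ∀ k, s k < m + 1} = (m + q).choose m := by
  classical
  have key : ∀ s : Fin q → ℕ, Monotone s → StrictMono (fun k : Fin q => s k + k.val) := by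
    intro s hs i j hij
    have := hs hij.le
    have h2 : i.val < j.val := hij
    show s i + i.val < s j + j.val
    omega
  let F : {s : Fin q → ℕ // Monotone s ∧ ∀ k, s k < m + 1} →
      {A : Finset ℕ // A ∈ Finset.powersetCard q (Finset.range (m + q))} := fun s =>
    ⟨Finset.univ.image (fun k : Fin q => s.1 k + k.val), by
      rw [Finset.mem_powersetCard]
      refine ⟨?_, ?_⟩
      · intro x hx
        simp only [Finset.mem_image, Finset.mem_univ, true_and] at hx
        obtain ⟨k, rfl⟩ := hx
        have := s.2.2 k
        have := k.isLt
        simp only [Finset.mem_range]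
        omega
      · rw [Finset.card_image_of_injective _ (key s.1 s.2.1).injective]
        simp⟩
  have hF : Function.Bijective F := by
    constructor
    · intro s s' h
      have h1 := congrArg (fun A => (A.1 : Set ℕ)) h
      simp only [F, Finset.coe_image, Finset.coe_univ, Set.image_univ] at h1
      have h2 := ((key s.1 s.2.1).range_inj (key s'.1 s'.2.1)).1 h1
      apply Subtype.ext
      funext k
      have := congrFun h2 k
      simpa using this
    · rintro ⟨A, hA⟩
      rw [Finset.mem_powersetCard] at hA
      let e := A.orderEmbOfFin hA.2
      have he : StrictMono e := e.strictMono
      have gap := rot_fin_strictMono_gap he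
      have hge : ∀ k : Fin q, k.val ≤ e k := by
        intro k
        have := gap k.val ⟨0, by omega⟩ k (by simp)
        omega
      have hle : ∀ k : Fin q, e k < m + 1 + k.val := by
        intro k
        have hk := k.isLt
        have h1 := gap (q - 1 - k.val) k ⟨q - 1, by omega⟩ (by simp; omega)
        have h2 := hA.1 (A.orderEmbOfFin_mem hA.2 ⟨q - 1, by omega⟩)
        rw [Finset.mem_range] at h2
        change e _ < _ at h2
        omega
      refine ⟨⟨fun k => e k - k.val, ?_, ?_⟩, ?_⟩
      · intro i j hij
        have h0 : i.val ≤ j.val := hij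
        have h1 := gap (j.val - i.val) i j (by omega)
        have := hge i
        show e i - i.val ≤ e j - j.val
        omega
      · intro k
        have := hle k
        have := hge k
        show e k - k.val < m + 1
        omega
      · apply Subtype.ext
        have : (fun k : Fin q => e k - k.val + k.val) = e := by
          funext k
          have := hge k
          omega
        show Finset.univ.image (fun k : Fin q => e k - k.val + k.val) = A
        rw [this]
        exact A.image_orderEmbOfFin_univ hA.2
  rw [Nat.card_eq_of_bijective F hF]
  simp only [Nat.card_eq_fintype_card, Fintype.card_coe, Finset.card_powersetCard,
    Finset.card_range]
  rw [Nat.choose_symm_add]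

/-- The solution of `d t_i = c_i + t_{i+p}`. -/
noncomputable def rotSol (d q : ℕ) (p : ZMod q) (c : ZMod q → ℕ) (i : ZMod q) : ℝ :=
  (∑ k ∈ Finset.range q, (c (i + k * p) : ℝ) * (d : ℝ) ^ (q - 1 - k)) / ((d : ℝ) ^ q - 1)

theorem rotSol_eq (d q : ℕ) (hd : 2 ≤ d) (hq : 1 ≤ q) (p : ZMod q) (c : ZMod q → ℕ)
    (i : ZMod q) : d * rotSol d q p c i = c i + rotSol d q p c (i + p) := by
  have hd1 : (1 : ℝ) < d := by exact_mod_cast (by omega : 1 < d)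
  have hD : (0 : ℝ) < (d : ℝ) ^ q - 1 := by
    have := one_lt_pow₀ hd1 (by omega : q ≠ 0)
    linarith
  unfold rotSol
  have h1 : (d : ℝ) * ∑ k ∈ Finset.range q, (c (i + k * p) : ℝ) * (d : ℝ) ^ (q - 1 - k)
      = ∑ k ∈ Finset.range q, (c (i + k * p) : ℝ) * (d : ℝ) ^ (q - k) := by
    rw [Finset.mul_sum]
    apply Finset.sum_congr rfl
    intro k hk
    rw [Finset.mem_range] at hk
    rw [show q - k = (q - 1 - k) + 1 by omega, pow_succ]
    ring
  have h2 := Finset.sum_range_succ (fun k : ℕ => (c (i + k * p) : ℝ) * (d : ℝ) ^ (q - k)) q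
  have h3 := Finset.sum_range_succ' (fun k : ℕ => (c (i + k * p) : ℝ) * (d : ℝ) ^ (q - k)) q
  rw [h3] at h2
  have h4 : ∑ k ∈ Finset.range q, (c (i + p + k * p) : ℝ) * (d : ℝ) ^ (q - 1 - k)
      = ∑ k ∈ Finset.range q, (c (i + (k + 1 : ℕ) * p) : ℝ) * (d : ℝ) ^ (q - (k + 1)) := by
    apply Finset.sum_congr rfl
    intro k _
    rw [show q - 1 - k = q - (k + 1) by omega]
    congr 3
    push_cast
    ring
  rw [h4]
  simp only [CharP.cast_eq_zero, Nat.cast_zero, zero_mul, add_zero, Nat.sub_self, pow_zero,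
    mul_one, Nat.sub_zero] at h2
  field_simp
  rw [h1]
  linarith

theorem rot_min (d q : ℕ) (hd : 2 ≤ d) (hq : 1 ≤ q) (p : ZMod q) (u : ZMod q → ℝ)
    (h : ∀ i, u (i + p) ≤ d * u i) (i : ZMod q) : 0 ≤ u i := by
  have : NeZero q := ⟨by omega⟩
  obtain ⟨m, hm⟩ := Finite.exists_min u
  have h1 := h m
  have h2 := hm (m + p)
  have hd1 : (2 : ℝ) ≤ d := by exact_mod_cast hd
  have h3 := hm i
  nlinarith

theorem rot_sol_nonneg (d q : ℕ) (hd : 2 ≤ d) (hq : 1 ≤ q) (p : ZMod q) (c : ZMod q → ℕ)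
    (t : ZMod q → ℝ) (ht : ∀ i, d * t i = c i + t (i + p)) (i : ZMod q) : 0 ≤ t i := by
  apply rot_min d q hd hq p t
  intro i
  rw [ht]
  have : (0 : ℝ) ≤ c i := by positivity
  linarith

theorem rot_sol_le_one (d q : ℕ) (hd : 2 ≤ d) (hq : 1 ≤ q) (p : ZMod q) (c : ZMod q → ℕ)
    (hc : ∀ i, c i < d)
    (t : ZMod q → ℝ) (ht : ∀ i, d * t i = c i + t (i + p)) (i : ZMod q) : t i ≤ 1 := by
  have := rot_min d q hd hq p (fun i => 1 - t i) ?_ i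
  · simpa using this
  intro i
  have h1 := ht i
  have : (c i : ℝ) + 1 ≤ d := by exact_mod_cast hc i
  linarith

theorem rot_sol_unique (d q : ℕ) (hd : 2 ≤ d) (hq : 1 ≤ q) (p : ZMod q) (c : ZMod q → ℕ)
    (t t' : ZMod q → ℝ) (ht : ∀ i, d * t i = c i + t (i + p))
    (ht' : ∀ i, d * t' i = c i + t' (i + p)) : t = t' := by
  funext i
  have h1 := rot_min d q hd hq p (fun i => t i - t' i)
    (by intro i; have := ht i; have := ht' i; linarith) i
  have h2 := rot_min d q hd hq p (fun i => t' i - t i)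
    (by intro i; have := ht i; have := ht' i; linarith) i
  linarith

/-- digit function -/
noncomputable def rotDig (d q : ℕ) (t : ZMod q → ℝ) (i : ZMod q) : ℕ := ⌊(d : ℝ) * t i⌋₊

theorem rotDig_eq {d q : ℕ} {p : ZMod q} {t : ZMod q → ℝ} (h : IsRotational d q p t)
    (i : ZMod q) : d * t i = rotDig d q t i + t (i + p) := by
  obtain ⟨h1, _, _, h4⟩ := h
  rw [← h4 i]
  have h0 : (0 : ℝ) ≤ d * t i := mul_nonneg (by positivity) (h1 i).1
  unfold sigmad rotDig
  rw [natCast_floor_eq_intCast_floor h0]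
  exact (Int.floor_add_fract _).symm

theorem rotDig_lt {d q : ℕ} (hd : 2 ≤ d) {p : ZMod q} {t : ZMod q → ℝ}
    (h : IsRotational d q p t) (i : ZMod q) : rotDig d q t i < d := by
  have h1 := rotDig_eq h i
  have h2 := h.1 i
  have h3 := h.1 (i + p)
  have hd1 : (2 : ℝ) ≤ d := by exact_mod_cast hd
  have : (rotDig d q t i : ℝ) < d := by nlinarith [h2.2, h3.1]
  exact_mod_cast this

theorem rotDig_mono {d q : ℕ} (hd : 2 ≤ d) {p : ZMod q} {t : ZMod q → ℝ}
    (h : IsRotational d q p t) {i j : ℕ} (hij : i ≤ j) (hj : j < q) :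
    rotDig d q t (i : ZMod q) ≤ rotDig d q t (j : ZMod q) := by
  rcases hij.eq_or_lt with rfl | hlt
  · exact le_rfl
  · have := h.2.1 i j (by rw [ZMod.val_natCast_of_lt (by omega), ZMod.val_natCast_of_lt hj]; exact hlt)
    unfold rotDig
    gcongr

theorem rotDig_strict {d q p : ℕ} (hd : 2 ≤ d) (hp2 : p < q) {t : ZMod q → ℝ}
    (h : IsRotational d q (p : ZMod q) t) {i j : ℕ} (hi : i + p < q) (hj1 : q ≤ j + p)
    (hj : j < q) :
    rotDig d q t (i : ZMod q) < rotDig d q t (j : ZMod q) := by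
  have h1 := h.2.1 i j (by
    rw [ZMod.val_natCast_of_lt (by omega), ZMod.val_natCast_of_lt hj]; omega)
  have e1 : ((i : ZMod q) + p) = ((i + p : ℕ) : ZMod q) := by push_cast; rfl
  have e2 : ((j : ZMod q) + p) = ((j + p - q : ℕ) : ZMod q) := by
    rw [Nat.cast_sub hj1]; push_cast; simp
  have h2 := h.2.1 ((j : ZMod q) + p) ((i : ZMod q) + p) (by
    rw [e1, e2, ZMod.val_natCast_of_lt hi, ZMod.val_natCast_of_lt (by omega)]; omega)
  have h3 := rotDig_eq h i
  have h4 := rotDig_eq h j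
  have hd1 : (2 : ℝ) ≤ d := by exact_mod_cast hd
  have : (rotDig d q t i : ℝ) < rotDig d q t j := by nlinarith
  exact_mod_cast this

/-- representative sequence computed from `t` -/
noncomputable def rotRep (d q p : ℕ) (t : ZMod q → ℝ) (k : Fin q) : ℕ :=
  if k.val ≤ q - p - 1 then rotDig d q t (k.val : ZMod q)
  else rotDig d q t (k.val : ZMod q) - 1

theorem rotRep_mono {d q p : ℕ} (hd : 2 ≤ d) (hp1 : 1 ≤ p) (hp2 : p < q) {t : ZMod q → ℝ}
    (h : IsRotational d q (p : ZMod q) t) : Monotone (rotRep d q p t) := by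
  intro i j hij
  have hij' : i.val ≤ j.val := hij
  have hj := j.isLt
  unfold rotRep
  have h1 := rotDig_mono hd h hij' hj
  split_ifs with ha hb hb
  · exact h1
  · have := rotDig_strict hd hp2 h (i := i.val) (j := j.val) (by omega) (by omega) hj
    omega
  · omega
  · omega

theorem rotRep_lt {d q p : ℕ} (hd : 2 ≤ d) (hp1 : 1 ≤ p) (hp2 : p < q) {t : ZMod q → ℝ}
    (h : IsRotational d q (p : ZMod q) t) (k : Fin q) : rotRep d q p t k < d - 1 := by
  unfold rotRep
  split_ifs with ha
  · have h1 := rotDig_strict hd hp2 h (i := k.val) (j := q - 1) (by omega) (by omega) (by omega)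
    have h2 := rotDig_lt hd h ((q - 1 : ℕ) : ZMod q)
    omega
  · have h2 := rotDig_lt hd h (k.val : ZMod q)
    omega

theorem rotDig_of_rep {d q p : ℕ} (hd : 2 ≤ d) (hp1 : 1 ≤ p) (hp2 : p < q) {t : ZMod q → ℝ}
    (h : IsRotational d q (p : ZMod q) t) (k : Fin q) :
    rotDig d q t (k.val : ZMod q) = rotRep d q p t k + if k.val ≤ q - p - 1 then 0 else 1 := by
  unfold rotRep
  split_ifs with ha
  · rfl
  · have hk := k.isLt
    have h1 := rotDig_strict hd hp2 h (i := 0) (j := k.val) (by omega) (by omega) hk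
    omega

theorem rotRep_inj {d q p : ℕ} (hd : 2 ≤ d) (hp1 : 1 ≤ p) (hp2 : p < q) {t t' : ZMod q → ℝ}
    (h : IsRotational d q (p : ZMod q) t) (h' : IsRotational d q (p : ZMod q) t')
    (heq : rotRep d q p t = rotRep d q p t') : t = t' := by
  have : NeZero q := ⟨by omega⟩
  have hc : rotDig d q t = rotDig d q t' := by
    funext i
    have h1 := rotDig_of_rep hd hp1 hp2 h ⟨i.val, i.val_lt⟩
    have h2 := rotDig_of_rep hd hp1 hp2 h' ⟨i.val, i.val_lt⟩
    simp only [ZMod.natCast_zmod_val] at h1 h2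
    rw [h1, h2, heq]
  apply rot_sol_unique d q hd (by omega) p (rotDig d q t) t t' (rotDig_eq h)
  rw [hc]
  exact rotDig_eq h'

theorem rot_range_inj {d q : ℕ} (hq : 1 ≤ q) {p : ZMod q} {t t' : ZMod q → ℝ}
    (h : IsRotational d q p t) (h' : IsRotational d q p t')
    (heq : Set.range t = Set.range t') : t = t' := by
  have : NeZero q := ⟨by omega⟩
  have hs : ∀ t : ZMod q → ℝ, IsRotational d q p t →
      StrictMono (fun k : Fin q => t (k.val : ZMod q)) := by
    intro t ht i j hij
    apply ht.2.1
    rw [ZMod.val_natCast_of_lt i.isLt, ZMod.val_natCast_of_lt j.isLt]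
    exact hij
  have hr : ∀ t : ZMod q → ℝ, Set.range (fun k : Fin q => t (k.val : ZMod q)) = Set.range t := by
    intro t
    ext x
    constructor
    · rintro ⟨k, rfl⟩
      exact ⟨_, rfl⟩
    · rintro ⟨i, rfl⟩
      exact ⟨⟨i.val, i.val_lt⟩, by simp⟩
  have := ((hs t h).range_inj (hs t' h')).1 (by rw [hr, hr, heq])
  funext i
  have := congrFun this ⟨i.val, i.val_lt⟩
  simpa using this

theorem rot_mul_surj {q p : ℕ} (hpq : Nat.gcd p q = 1) (i : ZMod q) :
    i * (p : ZMod q)⁻¹ * p = i := by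
  have : (p : ZMod q) * (p : ZMod q)⁻¹ = 1 := ZMod.coe_mul_inv_eq_one p hpq
  rw [mul_assoc, mul_comm (p : ZMod q)⁻¹, this, mul_one]

/-- propagation along `i ↦ i + p` -/
theorem rot_prop {q p : ℕ} (hq : 1 ≤ q) (hpq : Nat.gcd p q = 1) (P : ZMod q → Prop)
    (i0 : ZMod q) (h0 : P i0) (hs : ∀ i, P i → P (i + p)) (i : ZMod q) : P i := by
  have : NeZero q := ⟨by omega⟩
  have h : ∀ k : ℕ, P (i0 + k * p) := by
    intro k
    induction k with
    | zero => simpa using h0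
    | succ k ih =>
      have := hs _ ih
      convert this using 1
      push_cast
      ring
  have := h (((i - i0) * (p : ZMod q)⁻¹).val)
  rw [ZMod.natCast_zmod_val, rot_mul_surj hpq] at this
  simpa using this

theorem rot_orbit {d q p : ℕ} (hq : 1 ≤ q) (hpq : Nat.gcd p q = 1) {t : ZMod q → ℝ}
    (h : IsRotational d q (p : ZMod q) t) : Set.range t = sigmaOrbit d (t 0) := by
  have hk : ∀ k : ℕ, (sigmad d)^[k] (t 0) = t (k * p) := by
    intro k
    induction k with
    | zero => simp
    | succ k ih =>
      rw [Function.iterate_succ_apply', ih, h.2.2.2]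
      congr 1
      push_cast
      ring
  ext x
  constructor
  · rintro ⟨i, rfl⟩
    apply rot_prop hq hpq (fun i => t i ∈ sigmaOrbit d (t 0)) 0 ⟨0, rfl⟩
    rintro i ⟨k, hk⟩
    refine ⟨k + 1, ?_⟩
    rw [Function.iterate_succ_apply', hk, h.2.2.2]
  · rintro ⟨k, rfl⟩
    exact ⟨_, (hk k).symm⟩

theorem rot_ne_zero {d q : ℕ} {p : ZMod q} (hq : 1 ≤ q) {t : ZMod q → ℝ}
    (h : IsRotational d q p t) (i : ZMod q) : t i ≠ 0 := by
  have : NeZero q := ⟨by omega⟩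
  intro h0
  have h1 := h.2.2.2 i
  rw [h0] at h1
  simp only [sigmad, mul_zero, Int.fract_zero] at h1
  have hne : i ≠ i + p := by
    intro h2
    exact h.2.2.1 (by simpa using h2.symm)
  have hv : i.val ≠ (i + p).val := fun h => hne (ZMod.val_injective q h)
  rcases lt_or_gt_of_ne hv with hv | hv
  · have := h.2.1 _ _ hv
    linarith
  · have := h.2.1 _ _ hv
    linarith

theorem rot_tuple {d q p : ℕ} (hd : 2 ≤ d) (hq : 1 ≤ q) {t : ZMod q → ℝ}
    (h : IsRotational d q (p : ZMod q) t) (a : ZMod q → ℕ) (ha : ∀ j, a j < d)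
    (hm : tuplePoint d q a ∈ Set.range t) (hl : ∀ x ∈ Set.range t, tuplePoint d q a ≤ x)
    (j : ZMod q) : a j = rotDig d q t (j * p) := by
  have : NeZero q := ⟨by omega⟩
  set v := rotSol d q 1 a with hv
  have hve : ∀ i, d * v i = a i + v (i + 1) := rotSol_eq d q hd hq 1 a
  have hv0 : ∀ i, 0 ≤ v i := rot_sol_nonneg d q hd hq 1 a v hve
  have hv1 : ∀ i, v i ≤ 1 := rot_sol_le_one d q hd hq 1 a ha v hve
  have htp : tuplePoint d q a = Int.fract (v 0) := by
    simp only [hv, rotSol, tuplePoint, zero_add, mul_one]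
  have hne := rot_ne_zero hq h
  have h00 : Int.fract (v 0) = t 0 := by
    rw [← htp]
    apply le_antisymm (hl _ ⟨0, rfl⟩)
    obtain ⟨i, hi⟩ := hm
    rw [← hi]
    by_cases hi0 : i = 0
    · rw [hi0]
    · apply (h.2.1 0 i _).le
      rw [ZMod.val_zero]
      exact Nat.pos_of_ne_zero (by simpa using hi0)
  have hbase : v 0 = t 0 := by
    rcases (hv1 0).eq_or_lt with h1 | h1
    · rw [h1, Int.fract_one] at h00
      exact absurd h00.symm (hne 0)
    · rw [← h00]
      exact (Int.fract_eq_self.2 ⟨hv0 0, h1⟩).symm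
  have step : ∀ i, v i = t (i * p) → a i = rotDig d q t (i * p) ∧ v (i + 1) = t ((i + 1) * p) := by
    intro i hi
    have h1 := hve i
    have h2 := rotDig_eq h (i * p)
    rw [hi] at h1
    have e : (i + 1) * (p : ZMod q) = i * p + p := by ring
    rw [e]
    have h3 := h.1 (i * p + p)
    have h3' : 0 < t (i * p + p) := lt_of_le_of_ne h3.1 (hne _).symm
    have h4 := hv0 (i + 1)
    have h5 := hv1 (i + 1)
    have h6 : (a i : ℝ) < rotDig d q t (i * p) + 1 := by linarith [h3.2]
    have h7 : (rotDig d q t (i * p) : ℝ) < a i + 1 := by linarith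
    have h8 : a i < rotDig d q t (i * p) + 1 := by exact_mod_cast h6
    have h9 : rotDig d q t (i * p) < a i + 1 := by exact_mod_cast h7
    have h10 : a i = rotDig d q t (i * p) := by omega
    refine ⟨h10, ?_⟩
    rw [h10] at h1
    linarith
  have hall : ∀ k : ℕ, v (k : ZMod q) = t (k * p) := by
    intro k
    induction k with
    | zero => simpa using hbase
    | succ k ih =>
      have := (step _ ih).2
      push_cast
      exact this
  have := hall j.val
  rw [ZMod.natCast_zmod_val] at this
  exact (step j this).1

theorem rot_exists {d q p : ℕ} (hd : 2 ≤ d) (hp1 : 1 ≤ p) (hp2 : p < q)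
    (hpq : Nat.gcd p q = 1) (b : Fin q → ℕ) (hb : Monotone b) (hb1 : ∀ k, b k < d - 1) :
    ∃ t : ZMod q → ℝ, IsRotational d q (p : ZMod q) t ∧ rotRep d q p t = b := by
  have : NeZero q := ⟨by omega⟩
  have hq : 1 ≤ q := by omega
  have hd1 : (2 : ℝ) ≤ d := by exact_mod_cast hd
  set c : ZMod q → ℕ := fun i => b ⟨i.val, i.val_lt⟩ + if i.val ≤ q - p - 1 then 0 else 1 with hc
  have hcd : ∀ i, c i < d := by
    intro i
    have := hb1 ⟨i.val, i.val_lt⟩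
    simp only [hc]
    split_ifs <;> omega
  set t := rotSol d q (p : ZMod q) c with ht
  have hte : ∀ i, d * t i = c i + t (i + p) := rotSol_eq d q hd hq p c
  have ht0 : ∀ i, 0 ≤ t i := rot_sol_nonneg d q hd hq p c t hte
  have ht1 : ∀ i, t i ≤ 1 := rot_sol_le_one d q hd hq p c hcd t hte
  have hpne : (p : ZMod q) ≠ 0 := by
    rw [Ne, ZMod.natCast_eq_zero_iff]
    exact fun h => absurd (Nat.le_of_dvd (by omega) h) (by omega)
  -- index facts
  have hneg : ∀ k : ℕ, k < q → ((k : ZMod q) = -1 ↔ k + 1 = q) := by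
    intro k hk
    rw [eq_neg_iff_add_eq_zero]
    have : (k : ZMod q) + 1 = ((k + 1 : ℕ) : ZMod q) := by push_cast; rfl
    rw [this, ZMod.natCast_eq_zero_iff]
    constructor
    · intro h
      have := Nat.le_of_dvd (by omega) h
      omega
    · intro h
      rw [h]
  have hnegp : ∀ k : ℕ, k < q → ((k : ZMod q) + p = -1 ↔ k + p + 1 = q ∨ k + p + 1 = 2 * q) := by
    intro k hk
    rw [eq_neg_iff_add_eq_zero]
    have : (k : ZMod q) + p + 1 = ((k + p + 1 : ℕ) : ZMod q) := by push_cast; rfl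
    rw [this, ZMod.natCast_eq_zero_iff]
    constructor
    · rintro ⟨m, hm⟩
      have h1 : m ≠ 0 := by rintro rfl; omega
      have h2 : m < 3 := by
        by_contra h3
        have : q * 3 ≤ q * m := Nat.mul_le_mul_left q (by omega)
        omega
      interval_cases m <;> omega
    · rintro (h | h)
      · rw [h]
      · rw [h]; exact ⟨2, by ring⟩
  set D : ZMod q → ℝ := fun i => t (i + 1) - t i + if i = -1 then 1 else 0 with hD
  set e : ZMod q → ℝ := fun i => (c (i + 1) : ℝ) - c i + (if i = -1 then (d : ℝ) else 0)
    - (if i + p = -1 then 1 else 0) with he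
  have hDe : ∀ i, d * D i = e i + D (i + p) := by
    intro i
    have h1 := hte i
    have h2 := hte (i + 1)
    have h3 : i + 1 + (p : ZMod q) = i + p + 1 := by ring
    rw [h3] at h2
    simp only [hD, he]
    by_cases ha : i = -1
    · simp only [if_pos ha]
      linarith
    · simp only [if_neg ha]
      linarith
  have hcval : ∀ (k : ℕ) (hk : k < q), c (k : ZMod q) = b ⟨k, hk⟩ + if k ≤ q - p - 1 then 0 else 1 := by
    intro k hk
    simp only [hc, ZMod.val_natCast_of_lt hk]
  have he1 : 0 < e (-1) := by
    have h1 : (-1 : ZMod q) = ((q - 1 : ℕ) : ZMod q) := ((hneg (q - 1) (by omega)).2 (by omega)).symm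
    have h2 : ¬ ((-1 : ZMod q) + p = -1) := by
      intro h
      exact hpne (by simpa using h)
    simp only [he, if_neg h2, if_true]
    have h4 : (c (-1) : ℝ) + 1 ≤ d := by exact_mod_cast hcd (-1)
    have h5 : (0 : ℝ) ≤ c (-1 + 1) := by positivity
    linarith
  have he0 : ∀ i, 0 ≤ e i := by
    intro i
    by_cases hi : i = -1
    · rw [hi]; exact he1.le
    have hk := i.val_lt
    obtain ⟨k, hkk⟩ : ∃ k, k = i.val := ⟨_, rfl⟩
    rw [← hkk] at hk
    have hik : i = (k : ZMod q) := by rw [hkk, ZMod.natCast_zmod_val]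
    rw [hik, hneg k hk] at hi
    have hk1 : k + 1 < q := by omega
    have e1 : i + 1 = ((k + 1 : ℕ) : ZMod q) := by rw [hik]; push_cast; rfl
    have hbm : b ⟨k, hk⟩ ≤ b ⟨k + 1, hk1⟩ := hb (by rw [Fin.le_def]; simp)
    simp only [he]
    rw [e1, hik, hcval k hk, hcval (k + 1) hk1, if_neg ((hneg k hk).not.2 hi)]
    have hbm' : (b ⟨k, hk⟩ : ℝ) ≤ b ⟨k + 1, hk1⟩ := by exact_mod_cast hbm
    simp only [hnegp k hk]
    split_ifs <;> first | omega | (push_cast; linarith)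
  have hD0 : ∀ i, 0 ≤ D i := by
    apply rot_min d q hd hq p D
    intro i
    rw [hDe]
    linarith [he0 i]
  have hDpos : ∀ i, 0 < D i := by
    intro i
    by_contra hi
    have h1 := rot_prop hq hpq (fun i => D i ≤ 0) i (not_lt.1 hi) (by
      intro i hi
      have h2 := hDe i
      have h3 := he0 i
      have h4 : (d : ℝ) * D i ≤ 0 := mul_nonpos_of_nonneg_of_nonpos (by positivity) hi
      linarith) (-1)
    have h2 := hDe (-1)
    have h3 := hD0 (-1 + p)
    have h4 : (d : ℝ) * D (-1) ≤ 0 := mul_nonpos_of_nonneg_of_nonpos (by positivity) h1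
    linarith
  have hsucc : ∀ k : ℕ, k + 1 < q → t (k : ZMod q) < t ((k + 1 : ℕ) : ZMod q) := by
    intro k hk
    have := hDpos k
    simp only [hD] at this
    rw [if_neg (by rw [hneg k (by omega)]; omega)] at this
    push_cast
    linarith
  have hmono : ∀ (m k : ℕ), k + m + 1 < q → t (k : ZMod q) < t ((k + m + 1 : ℕ) : ZMod q) := by
    intro m k
    induction m with
    | zero => exact hsucc k
    | succ m ih =>
      intro h
      exact (ih (by omega)).trans (hsucc (k + m + 1) h)
  have hlt : ∀ i j : ZMod q, i.val < j.val → t i < t j := by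
    intro i j hij
    have hj := j.val_lt
    have := hmono (j.val - i.val - 1) i.val (by omega)
    rw [show i.val + (j.val - i.val - 1) + 1 = j.val by omega] at this
    simpa using this
  have ht1' : ∀ i, t i < 1 := by
    intro i
    refine lt_of_le_of_ne (ht1 i) ?_
    intro h1
    have h2 := hte i
    have h3 : (c i : ℝ) + 1 ≤ d := by exact_mod_cast hcd i
    rw [h1] at h2
    have h4 := ht1 (i + p)
    have h5 : t (i + p) = 1 := by linarith
    have hne : i.val ≠ (i + p).val := fun h => by
      have := ZMod.val_injective q h
      exact hpne (by simpa using this.symm)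
    rcases lt_or_gt_of_ne hne with hv | hv
    · have := hlt _ _ hv
      linarith
    · have := hlt _ _ hv
      linarith
  have hrot : IsRotational d q (p : ZMod q) t := by
    refine ⟨fun i => ⟨ht0 i, ht1' i⟩, hlt, hpne, ?_⟩
    intro i
    unfold sigmad
    rw [hte i, Int.fract_natCast_add]
    exact Int.fract_eq_self.2 ⟨ht0 _, ht1' _⟩
  refine ⟨t, hrot, ?_⟩
  funext k
  have hdig : rotDig d q t (k.val : ZMod q) = c (k.val : ZMod q) := by
    unfold rotDig
    rw [hte]
    rw [Nat.floor_eq_iff (by have := ht0 ((k.val : ZMod q) + p); positivity)]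
    exact ⟨by linarith [ht0 ((k.val : ZMod q) + p)], by linarith [ht1' ((k.val : ZMod q) + p)]⟩
  unfold rotRep
  rw [hdig, hcval k.val k.isLt]
  split_ifs <;> simp

theorem stmt11 (d q p : ℕ) (hd : 2 ≤ d) (hq : 2 ≤ q)
    (hp1 : 1 ≤ p) (hp2 : p ≤ q - 1) (hpq : Nat.gcd p q = 1) :
    -- there is a bijection `f` from the set of `σ_d`-rotational orbits with rotation
    -- number `p/q` onto the set of `(d-1)`-sequences of length `q`, sending each orbit
    -- to its representative sequence; in particular the number of such orbits is
    -- `C(d-2+q, d-2)`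
    (∃ f : {O : Set ℝ // (∃ x : ℝ, O = sigmaOrbit d x) ∧
            ∃ t : ZMod q → ℝ, Set.range t = O ∧ IsRotational d q ((p : ℕ) : ZMod q) t} →
          {s : Fin q → ℕ // Monotone s ∧ ∀ k, s k < d - 1},
        Function.Bijective f ∧
        ∀ (O : {O : Set ℝ // (∃ x : ℝ, O = sigmaOrbit d x) ∧
            ∃ t : ZMod q → ℝ, Set.range t = O ∧ IsRotational d q ((p : ℕ) : ZMod q) t})
          (a : ZMod q → ℕ), (∀ j, a j < d) →
          tuplePoint d q a ∈ O.1 → (∀ x ∈ O.1, tuplePoint d q a ≤ x) →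
          ∀ k : Fin q, (f O).1 k = repDigit q p a k.val) ∧
    Nat.card {O : Set ℝ // (∃ x : ℝ, O = sigmaOrbit d x) ∧
        ∃ t : ZMod q → ℝ, Set.range t = O ∧ IsRotational d q ((p : ℕ) : ZMod q) t} =
      (d - 2 + q).choose (d - 2) := by
  have hp2' : p < q := by omega
  have hq1 : 1 ≤ q := by omega
  let Orb := {O : Set ℝ // (∃ x : ℝ, O = sigmaOrbit d x) ∧
            ∃ t : ZMod q → ℝ, Set.range t = O ∧ IsRotational d q ((p : ℕ) : ZMod q) t}
  let T : Orb → ZMod q → ℝ := fun O => Classical.choose O.2.2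
  have hT : ∀ O : Orb, Set.range (T O) = O.1 ∧ IsRotational d q ((p : ℕ) : ZMod q) (T O) :=
    fun O => Classical.choose_spec O.2.2
  let f : Orb → {s : Fin q → ℕ // Monotone s ∧ ∀ k, s k < d - 1} := fun O =>
    ⟨rotRep d q p (T O), rotRep_mono hd hp1 hp2' (hT O).2, rotRep_lt hd hp1 hp2' (hT O).2⟩
  have hf : Function.Bijective f := by
    constructor
    · intro O O' h
      have h1 : rotRep d q p (T O) = rotRep d q p (T O') := congrArg Subtype.val h
      have h2 := rotRep_inj hd hp1 hp2' (hT O).2 (hT O').2 h1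
      apply Subtype.ext
      rw [← (hT O).1, ← (hT O').1, h2]
    · rintro ⟨b, hb, hb1⟩
      obtain ⟨t, ht, hr⟩ := rot_exists hd hp1 hp2' hpq b hb hb1
      refine ⟨⟨Set.range t, ⟨t 0, rot_orbit hq1 hpq ht⟩, t, rfl, ht⟩, ?_⟩
      apply Subtype.ext
      show rotRep d q p (T _) = b
      rw [← hr]
      congr 1
      exact rot_range_inj hq1 (hT _).2 ht (hT _).1
  refine ⟨⟨f, hf, ?_⟩, ?_⟩
  · intro O a ha hm hl k
    have h1 := rot_tuple hd hq1 (hT O).2 a ha (by rw [(hT O).1]; exact hm)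
      (by rw [(hT O).1]; exact hl)
    show rotRep d q p (T O) k = _
    unfold rotRep repDigit
    rw [h1, rot_mul_surj hpq]
  · rw [Nat.card_eq_of_bijective f hf]
    have := rot_card_seq (d - 2) q hq1
    rw [show d - 2 + 1 = d - 1 by omega] at this
    exact this
end

section
/- Fix d ≥ 2 and a fraction p/q in lowest terms with q ≥ 2, 1 ≤ p ≤ q−1, gcd(p,q) = 1. For 1 ≤ k ≤ d−1, let N_k be the number of σ_d-rotational sets with rotation number kp/(kq) (equal to p/q after reduction) that are the union of exactly k distinct σ_d-orbits. Then N_1 = C(d−2+q, d−2), and for 2 ≤ k ≤ d−1, N_k = C(d−2+kq, d−2) − ∑_{j=1}^{k−1} C(k−1, j−1) · N_j. -/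
/-- `N_k`: the number of `σ_d`-rotational sets with rotation number `kp/(kq)`
(equal to `p/q` after reduction) that are the union of exactly `k` distinct `σ_d`-orbits. -/
noncomputable def countRotSets (d q p k : ℕ) : ℕ :=
  Nat.card {A : Set ℝ //
    (∃ t : ZMod (k * q) → ℝ, Set.range t = A ∧
      IsRotational d (k * q) ((k * p : ℕ) : ZMod (k * q)) t) ∧
    {O : Set ℝ | ∃ x ∈ A, O = sigmaOrbit d x}.ncard = k}


namespace RotAux

theorem val_succ {n : ℕ} [NeZero n] {i : ZMod n} (hi : i ≠ -1) : (i + 1).val = i.val + 1 := by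
  have hlt := ZMod.val_lt i
  rcases Nat.lt_or_ge (i.val + 1) n with h | h
  · have h1 : (1 : ZMod n).val = 1 := by
      rw [ZMod.val_one_eq_one_mod, Nat.mod_eq_of_lt (by omega)]
    rw [ZMod.val_add_of_lt (by rw [h1]; exact h), h1]
  · exfalso
    apply hi
    have h2 : ((i.val + 1 : ℕ) : ZMod n) = 0 := by
      rw [show i.val + 1 = n by omega]; simp
    push_cast at h2
    rw [ZMod.natCast_zmod_val] at h2
    exact eq_neg_of_add_eq_zero_left h2

theorem zmod_ind {n : ℕ} [NeZero n] {P : ZMod n → Prop} (h0 : P 0)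
    (hs : ∀ i, i ≠ -1 → P i → P (i + 1)) : ∀ i, P i := by
  have key : ∀ l : ℕ, l < n → P (l : ZMod n) := by
    intro l
    induction l with
    | zero => intro _; simpa using h0
    | succ l ih =>
      intro hl
      have := hs (l : ZMod n) (by
        intro h
        have h2 : ((l + 1 : ℕ) : ZMod n) = 0 := by push_cast; rw [h]; ring
        rw [ZMod.natCast_eq_zero_iff] at h2
        exact absurd (Nat.le_of_dvd (by omega) h2) (by omega)) (ih (by omega))
      simpa using this
  intro i
  have := key i.val (ZMod.val_lt i)
  rwa [ZMod.natCast_zmod_val] at this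

theorem le_neg_one {n : ℕ} [NeZero n] (i : ZMod n) : i.val ≤ (-1 : ZMod n).val := by
  have hlt := ZMod.val_lt i
  obtain ⟨n, rfl⟩ := Nat.exists_eq_succ_of_ne_zero (NeZero.ne n)
  rw [ZMod.val_neg_one]; omega

theorem strict_of_succ {n : ℕ} [NeZero n] {t : ZMod n → ℝ}
    (h : ∀ i, i ≠ -1 → t i < t (i + 1)) : ∀ j i : ZMod n, i.val < j.val → t i < t j := by
  apply zmod_ind
  · intro i hi; simp at hi
  · intro j hj ih i hi
    rw [val_succ hj] at hi
    rcases Nat.lt_or_ge i.val j.val with h1 | h1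
    · exact (ih i h1).trans (h j hj)
    · have : i = j := ZMod.val_injective n (by omega)
      subst this
      exact h i hj

theorem mono_of_succ {n : ℕ} [NeZero n] {t : ZMod n → ℕ}
    (h : ∀ i, i ≠ -1 → t i ≤ t (i + 1)) : ∀ j i : ZMod n, i.val ≤ j.val → t i ≤ t j := by
  apply zmod_ind
  · intro i hi
    have : i = 0 := ZMod.val_injective n (by simpa using hi)
    rw [this]
  · intro j hj ih i hi
    rw [val_succ hj] at hi
    rcases Nat.lt_or_ge j.val i.val with h1 | h1
    · have : i = j + 1 := ZMod.val_injective n (by rw [val_succ hj]; omega)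
      rw [this]
    · exact (ih i h1).trans (h j hj)

theorem scale {d q : ℕ} (hd : 2 ≤ d) (hq : 0 < q) (x : ℕ → ℝ)
    (hx : ∀ l, (d : ℝ) * x l = x (l + 1)) (hxq : x q = x 0) : x 0 = 0 := by
  have key : ∀ l, x l = (d : ℝ) ^ l * x 0 := by
    intro l
    induction l with
    | zero => simp
    | succ l ih => rw [← hx, ih]; ring
  have h1 := key q
  rw [hxq] at h1
  have h2 : (1 : ℝ) < (d : ℝ) ^ q := one_lt_pow₀ (by exact_mod_cast hd) (by omega)
  have h3 : ((d : ℝ) ^ q - 1) * x 0 = 0 := by linarith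
  rcases mul_eq_zero.mp h3 with h | h
  · linarith
  · exact h

/-- Arithmetic data on the rotation `i ↦ i + s` of `ZMod n`, with orbits the fibres of `π`. -/
structure RotData (n k q : ℕ) (s : ZMod n) (π : ZMod n →+* ZMod k) : Prop where
  hn : n ≠ 0
  hnk : n = k * q
  hk : k ≠ 0
  hq : 0 < q
  hs0 : s ≠ 0
  hps : π s = 0
  hqs : (q : ZMod n) * s = 0
  hit : ∀ i j, π i = π j → ∃ l : ℕ, j = i + l * s

/-- Digit sequences. -/
def MSet (d n k : ℕ) (s : ZMod n) (π : ZMod n →+* ZMod k) : Set (ZMod n → ℕ) :=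
  {m | m (-1) ≤ d - 1 ∧ (∀ i, i ≠ -1 → m i ≤ m (i + 1)) ∧ m (-s - 1) < m (-s) ∧
    ∀ c, ∃ i, π i = c ∧ m i < m (i + 1)}

variable {d n k q : ℕ} {s : ZMod n} {π : ZMod n →+* ZMod k}

/-- The digit equation. -/
theorem digit_eq {t : ZMod n → ℝ} (ht : IsRotational d n s t) (i : ZMod n) :
    (d : ℝ) * t i = (⌊(d : ℝ) * t i⌋₊ : ℝ) + t (i + s) := by
  have h := ht.2.2.2 i
  unfold sigmad at h
  rw [← h]
  have h0 : 0 ≤ (d : ℝ) * t i := mul_nonneg (by positivity) (ht.1 i).1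
  rw [natCast_floor_eq_intCast_floor h0]
  exact (Int.floor_add_fract _).symm

theorem succ_lt [NeZero n] {t : ZMod n → ℝ} (ht : IsRotational d n s t) (i : ZMod n) (hi : i ≠ -1) :
    t i < t (i + 1) := ht.2.1 _ _ (by rw [val_succ hi]; omega)

theorem uniq (hd : 2 ≤ d) (h : RotData n k q s π) {x : ZMod n → ℝ}
    (hx : ∀ i, (d : ℝ) * x i = x (i + s)) (i : ZMod n) : x i = 0 := by
  have := scale hd h.hq (fun l => x (i + l * s)) (by
    intro l
    simp only [hx]
    congr 1; push_cast; ring) (by simp [h.hqs])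
  simpa using this

theorem floor_mem (hd : 2 ≤ d) (h : RotData n k q s π) {t : ZMod n → ℝ}
    (ht : IsRotational d n s t) : (fun i => ⌊(d : ℝ) * t i⌋₊) ∈ MSet d n k s π := by
  have : NeZero n := ⟨h.hn⟩
  have hdig := digit_eq ht
  have hd0 : (0 : ℝ) < d := by positivity
  have hM1 : ∀ i, i ≠ -1 → ⌊(d : ℝ) * t i⌋₊ ≤ ⌊(d : ℝ) * t (i + 1)⌋₊ := by
    intro i hi
    exact Nat.floor_mono (mul_le_mul_of_nonneg_left (succ_lt ht i hi).le hd0.le)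
  have hM2 : ⌊(d : ℝ) * t (-s - 1)⌋₊ < ⌊(d : ℝ) * t (-s)⌋₊ := by
    have h1 := hdig (-s - 1)
    have h2 := hdig (-s)
    rw [show -s - 1 + s = -1 by ring] at h1
    rw [show -s + s = 0 by ring] at h2
    have h3 := succ_lt ht (-s - 1) (by
      intro h4
      apply h.hs0
      have : s = -(-s - 1) - 1 := by ring
      rw [this, h4]; ring)
    rw [show -s - 1 + 1 = -s by ring] at h3
    have h4 : t 0 ≤ t (-1) := by
      rcases Nat.eq_or_lt_of_le (le_neg_one (0 : ZMod n)) with h5 | h5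
      · rw [ZMod.val_injective n h5]
      · exact (ht.2.1 _ _ h5).le
    have h5 := mul_lt_mul_of_pos_left h3 hd0
    rw [h1, h2] at h5
    have : (⌊(d : ℝ) * t (-s - 1)⌋₊ : ℝ) < (⌊(d : ℝ) * t (-s)⌋₊ : ℝ) := by linarith
    exact_mod_cast this
  refine ⟨?_, hM1, hM2, ?_⟩
  · have : ⌊(d : ℝ) * t (-1)⌋₊ < d := by
      rw [Nat.floor_lt (mul_nonneg hd0.le (ht.1 _).1)]
      have := mul_lt_mul_of_pos_left (ht.1 (-1)).2 hd0
      linarith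
    show ⌊(d : ℝ) * t (-1)⌋₊ ≤ d - 1
    omega
  · intro c
    by_contra hc
    push Not at hc
    have hcc : c ≠ -1 := by
      intro hc1
      have := hc (-s - 1) (by rw [map_sub, map_neg, map_one, h.hps, hc1]; ring)
      simp only [show -s - 1 + 1 = -s by ring] at this
      omega
    obtain ⟨i, hi⟩ : ∃ i, π i = c := (ZMod.ringHom_surjective π) c
    have hne : ∀ j, π j = c → j ≠ -1 := by
      rintro j hj rfl
      apply hcc; rw [← hj]; simp
    have heq : ∀ j, π j = c → (d : ℝ) * (t (j + 1) - t j) = t (j + s + 1) - t (j + s) := by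
      intro j hj
      have h1 := hdig j
      have h2 := hdig (j + 1)
      have h3 : ⌊(d : ℝ) * t j⌋₊ = ⌊(d : ℝ) * t (j + 1)⌋₊ :=
        le_antisymm (hM1 j (hne j hj)) (hc j hj)
      rw [show j + 1 + s = j + s + 1 by ring, ← h3] at h2
      linarith
    have := scale hd h.hq (fun l => t (i + l * s + 1) - t (i + l * s)) (by
      intro l
      have := heq (i + l * s) (by simp [h.hps, hi])
      simp only [this]
      push_cast
      congr 2 <;> ring) (by simp [h.hqs])
    have h2 := succ_lt ht i (hne i hi)
    simp at this
    linarith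

theorem floor_inj (hd : 2 ≤ d) (h : RotData n k q s π) {t t' : ZMod n → ℝ}
    (ht : IsRotational d n s t) (ht' : IsRotational d n s t')
    (he : ∀ i, ⌊(d : ℝ) * t i⌋₊ = ⌊(d : ℝ) * t' i⌋₊) : t = t' := by
  funext i
  have := uniq hd h (x := fun i => t i - t' i) (by
    intro i
    have h1 := digit_eq ht i
    have h2 := digit_eq ht' i
    rw [he i] at h1
    linarith) i
  linarith

theorem exists_t (hd : 2 ≤ d) (h : RotData n k q s π) {m : ZMod n → ℕ}
    (hm : m ∈ MSet d n k s π) : ∃ t, IsRotational d n s t ∧ ∀ i, ⌊(d : ℝ) * t i⌋₊ = m i := by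
  have : NeZero n := ⟨h.hn⟩
  obtain ⟨hm0, hm1, hm2, hm3⟩ := hm
  have hd2 : (2 : ℝ) ≤ d := by exact_mod_cast hd
  have hdq : (1 : ℝ) < (d : ℝ) ^ q := one_lt_pow₀ (by linarith) (by have := h.hq; omega)
  let S : ZMod n → ℝ := fun i => ∑ l ∈ Finset.range q, (m (i + l * s) : ℝ) * (d : ℝ) ^ (q - 1 - l)
  have hS : ∀ i, (d : ℝ) * S i = S (i + s) + m i * ((d : ℝ) ^ q - 1) := by
    intro i
    have e1 : (d : ℝ) * S i = ∑ l ∈ Finset.range q, (m (i + l * s) : ℝ) * (d : ℝ) ^ (q - l) := by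
      simp only [S, Finset.mul_sum]
      apply Finset.sum_congr rfl
      intro l hl
      have := Finset.mem_range.mp hl
      rw [show q - l = (q - 1 - l) + 1 by omega]; ring
    have e2 : S (i + s) =
        ∑ l ∈ Finset.range q, (m (i + (l + 1 : ℕ) * s) : ℝ) * (d : ℝ) ^ (q - (l + 1)) := by
      simp only [S]
      apply Finset.sum_congr rfl
      intro l hl
      rw [show q - (l + 1) = (q - 1 - l) by omega]
      congr 3
      push_cast; ring
    have e3 := Finset.sum_range_succ (fun l : ℕ => (m (i + l * s) : ℝ) * (d : ℝ) ^ (q - l)) q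
    have e4 := Finset.sum_range_succ' (fun l : ℕ => (m (i + l * s) : ℝ) * (d : ℝ) ^ (q - l)) q
    rw [← e1] at e3
    rw [← e2] at e4
    simp [h.hqs] at e3 e4
    linarith
  let t : ZMod n → ℝ := fun i => S i / ((d : ℝ) ^ q - 1)
  have htd : ∀ i, (d : ℝ) * t i = m i + t (i + s) := by
    intro i
    have : ((d : ℝ) ^ q - 1) ≠ 0 := by linarith
    simp only [t]
    field_simp
    rw [hS]; ring
  have ht0 : ∀ i, 0 ≤ t i := by
    intro i
    apply div_nonneg
    · apply Finset.sum_nonneg; intros; positivity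
    · linarith
  have hmle : ∀ i, m i ≤ d - 1 := fun i =>
    (mono_of_succ hm1 (-1) i (le_neg_one i)).trans hm0
  have hmle' : ∀ i, (m i : ℝ) ≤ d - 1 := by
    intro i
    have := hmle i
    have h2 : m i + 1 ≤ d := by omega
    have h3 : ((m i + 1 : ℕ) : ℝ) ≤ d := by exact_mod_cast h2
    push_cast at h3; linarith
  have ht1 : ∀ i, t i ≤ 1 := by
    obtain ⟨i0, hi0⟩ := Finite.exists_max t
    intro i
    refine (hi0 i).trans ?_
    have h1 := htd i0
    have h2 := hi0 (i0 + s)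
    have h3 := hmle' i0
    nlinarith
  have ht1' : ∀ i, t i < 1 := by
    intro i
    rcases (ht1 i).lt_or_eq with h1 | h1
    · exact h1
    exfalso
    have key : ∀ l : ℕ, t (i + l * s) = 1 := by
      intro l
      induction l with
      | zero => simpa using h1
      | succ l ih =>
        have h2 := htd (i + l * s)
        rw [ih] at h2
        have h3 := hmle' (i + l * s)
        have h4 := ht1 (i + l * s + s)
        rw [show i + (l + 1 : ℕ) * s = i + l * s + s by push_cast; ring]
        linarith
    obtain ⟨j, hj, hj2⟩ := hm3 (π i)
    obtain ⟨l, rfl⟩ := h.hit i j hj.symm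
    have h2 := htd (i + l * s)
    rw [key l] at h2
    have h5 := hmle' (i + l * s + 1)
    have h4 := ht1 (i + l * s + s)
    have h6 : (m (i + l * s) : ℝ) < m (i + l * s + 1) := by exact_mod_cast hj2
    linarith
  have hlt : ∀ i, i ≠ -1 → t i < t (i + 1) := by
    intro i hi
    by_contra hcon
    push Not at hcon
    have step : ∀ j, t (j + 1) ≤ t j → ¬ (m j < m (j + 1)) := by
      intro j hj hlt
      have h1 := htd j
      have h2 := htd (j + 1)
      have h3 : (m j : ℝ) + 1 ≤ m (j + 1) := by exact_mod_cast hlt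
      have h4 := ht1' (j + s)
      have h5 := ht0 (j + 1 + s)
      nlinarith
    have key : ∀ l : ℕ, i + l * s ≠ -1 ∧ t (i + l * s + 1) ≤ t (i + l * s) := by
      intro l
      induction l with
      | zero => simpa using ⟨hi, hcon⟩
      | succ l ih =>
        obtain ⟨a, b⟩ := ih
        have h0 := step _ b
        rw [show i + (l + 1 : ℕ) * s = i + l * s + s by push_cast; ring]
        constructor
        · intro h1
          apply h0
          have : i + l * s = -s - 1 := by linear_combination h1
          rw [this, show -s - 1 + 1 = -s by ring]
          exact hm2
        · have h1 := htd (i + l * s)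
          have h2 := htd (i + l * s + 1)
          have h3 : (m (i + l * s) : ℝ) ≤ m (i + l * s + 1) := by exact_mod_cast hm1 _ a
          rw [show i + l * s + s + 1 = i + l * s + 1 + s by ring]
          nlinarith
    obtain ⟨j, hj, hj2⟩ := hm3 (π i)
    obtain ⟨l, rfl⟩ := h.hit i j hj.symm
    exact step _ (key l).2 hj2
  refine ⟨t, ⟨fun i => ⟨ht0 i, ht1' i⟩, fun i j hij => strict_of_succ hlt j i hij, h.hs0, ?_⟩, ?_⟩
  · intro i
    unfold sigmad
    rw [htd]
    rw [Int.fract_natCast_add]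
    exact Int.fract_eq_self.mpr ⟨ht0 _, ht1' _⟩
  · intro i
    rw [htd, Nat.floor_eq_iff (add_nonneg (Nat.cast_nonneg _) (ht0 _))]
    exact ⟨by linarith [ht0 (i + s)], by linarith [ht1' (i + s)]⟩

theorem orbit_eq {t : ZMod n → ℝ} (ht : IsRotational d n s t) (i : ZMod n) :
    sigmaOrbit d (t i) = {x | ∃ l : ℕ, x = t (i + l * s)} := by
  have key : ∀ l : ℕ, (sigmad d)^[l] (t i) = t (i + l * s) := by
    intro l
    induction l with
    | zero => simp
    | succ l ih =>
      rw [Function.iterate_succ_apply', ih, ht.2.2.2]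
      congr 1; push_cast; ring
  ext x
  simp only [sigmaOrbit, Set.mem_ofPred_eq, key]
  constructor <;> rintro ⟨l, hl⟩ <;> exact ⟨l, hl.symm⟩

theorem t_inj [NeZero n] {t : ZMod n → ℝ} (ht : IsRotational d n s t) : Function.Injective t := by
  intro i j hij
  apply ZMod.val_injective n
  rcases Nat.lt_trichotomy i.val j.val with h | h | h
  · exact absurd hij (ht.2.1 _ _ h).ne
  · exact h
  · exact absurd hij (ht.2.1 _ _ h).ne'

theorem orbit_count (h : RotData n k q s π) {t : ZMod n → ℝ} (ht : IsRotational d n s t) :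
    {O : Set ℝ | ∃ x ∈ Set.range t, O = sigmaOrbit d x}.ncard = k := by
  have : NeZero n := ⟨h.hn⟩
  have : NeZero k := ⟨h.hk⟩
  have hF : ∀ i j, sigmaOrbit d (t i) = sigmaOrbit d (t j) ↔ π i = π j := by
    intro i j
    rw [orbit_eq ht, orbit_eq ht]
    constructor
    · intro he
      have : t i ∈ {x | ∃ l : ℕ, x = t (j + l * s)} := by
        rw [← he]; exact ⟨0, by simp⟩
      obtain ⟨l, hl⟩ := this
      rw [t_inj ht hl]; simp [h.hps]
    · have aux : ∀ i j, π i = π j →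
          {x | ∃ l : ℕ, x = t (i + l * s)} ⊆ {x | ∃ l : ℕ, x = t (j + l * s)} := by
        rintro i j hij x ⟨l, rfl⟩
        obtain ⟨l', rfl⟩ := h.hit j i hij.symm
        exact ⟨l' + l, by congr 1; push_cast; ring⟩
      intro hij
      exact Set.Subset.antisymm (aux _ _ hij) (aux _ _ hij.symm)
  obtain ⟨r, hr⟩ := (ZMod.ringHom_surjective π).hasRightInverse
  have : {O : Set ℝ | ∃ x ∈ Set.range t, O = sigmaOrbit d x} =
      Set.range (fun c : ZMod k => sigmaOrbit d (t (r c))) := by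
    ext O
    constructor
    · rintro ⟨_, ⟨i, rfl⟩, rfl⟩
      exact ⟨π i, (hF _ _).mpr (hr _)⟩
    · rintro ⟨c, rfl⟩
      exact ⟨_, ⟨_, rfl⟩, rfl⟩
  rw [this, ← Set.image_univ, Set.ncard_image_of_injective, Set.ncard_univ, Nat.card_zmod]
  intro c c' hcc
  have := (hF _ _).mp hcc
  rwa [hr, hr] at this

theorem range_inj' [NeZero n] {t t' : ZMod n → ℝ} (ht : IsRotational d n s t)
    (ht' : IsRotational d n s t') (he : Set.range t = Set.range t') : t = t' := by
  obtain ⟨n, rfl⟩ := Nat.exists_eq_succ_of_ne_zero (NeZero.ne n)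
  have h1 : StrictMono (fun i : Fin (n + 1) => t i) := fun i j hij => ht.2.1 i j hij
  have h2 : StrictMono (fun i : Fin (n + 1) => t' i) := fun i j hij => ht'.2.1 i j hij
  exact (StrictMono.range_inj h1 h2).mp he

theorem card_rot (hd : 2 ≤ d) (h : RotData n k q s π) :
    Nat.card {A : Set ℝ // (∃ t : ZMod n → ℝ, Set.range t = A ∧ IsRotational d n s t) ∧
      {O : Set ℝ | ∃ x ∈ A, O = sigmaOrbit d x}.ncard = k} = Nat.card (MSet d n k s π) := by
  have : NeZero n := ⟨h.hn⟩
  have e1 : Nat.card {t : ZMod n → ℝ // IsRotational d n s t} =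
      Nat.card {A : Set ℝ // (∃ t : ZMod n → ℝ, Set.range t = A ∧ IsRotational d n s t) ∧
      {O : Set ℝ | ∃ x ∈ A, O = sigmaOrbit d x}.ncard = k} := by
    apply Nat.card_eq_of_bijective
      (fun t => ⟨Set.range t.1, ⟨t.1, rfl, t.2⟩, orbit_count h t.2⟩)
    constructor
    · intro t t' he
      exact Subtype.ext (range_inj' t.2 t'.2 (congrArg Subtype.val he))
    · rintro ⟨A, ⟨t, rfl, ht⟩, hA⟩
      exact ⟨⟨t, ht⟩, rfl⟩
  have e2 : Nat.card {t : ZMod n → ℝ // IsRotational d n s t} = Nat.card (MSet d n k s π) := by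
    apply Nat.card_eq_of_bijective
      (fun t : {t : ZMod n → ℝ // IsRotational d n s t} =>
        (⟨fun i => ⌊(d : ℝ) * t.1 i⌋₊, floor_mem hd h t.2⟩ : MSet d n k s π))
    constructor
    · intro t t' he
      exact Subtype.ext (floor_inj hd h t.2 t'.2 (congrFun (congrArg Subtype.val he)))
    · rintro ⟨m, hm⟩
      obtain ⟨t, ht, htm⟩ := exists_t hd h hm
      exact ⟨⟨t, ht⟩, Subtype.ext (funext htm)⟩
  rw [← e1, e2]


/-- Gap sequences. -/
def ESet (d n k : ℕ) [NeZero n] (s : ZMod n) (π : ZMod n →+* ZMod k) :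
    Set (Option (ZMod n) → ℕ) :=
  {e | ∑ x, e x = d - 1 ∧ e (some (-s - 1)) ≠ 0 ∧ ∀ c, c ≠ -1 → ∃ i, π i = c ∧ e (some i) ≠ 0}

/-- The gaps of a digit sequence. -/
def gaps (d n : ℕ) (m : ZMod n → ℕ) : Option (ZMod n) → ℕ
  | none => d - 1 - m (-1)
  | some i => if i = -1 then m 0 else m (i + 1) - m i

theorem sum_gaps [NeZero n] {m e : ZMod n → ℕ} (h0 : e (-1) = m 0)
    (h1 : ∀ i, i ≠ -1 → m (i + 1) = m i + e i) : ∑ i, e i = m (-1) := by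
  have key : ∀ i, m (i + 1) + (if i = -1 then m (-1) else 0) = m i + e i := by
    intro i
    by_cases hi : i = -1
    · subst hi; simp [h0]; ring
    · simp [hi, h1 i hi]
  have h2 := Finset.sum_congr (rfl : (Finset.univ : Finset (ZMod n)) = Finset.univ)
    (fun i _ => key i)
  rw [Finset.sum_add_distrib, Finset.sum_add_distrib] at h2
  have h3 : ∑ i, m (i + 1) = ∑ i, m i := Equiv.sum_comp (Equiv.addRight (1 : ZMod n)) m
  rw [h3] at h2
  simp at h2
  exact h2.symm

theorem ne_neg_one_of (h : RotData n k q s π) : -s - 1 ≠ -1 := by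
  intro h4
  apply h.hs0
  linear_combination -h4

theorem card_MSet [NeZero n] (h : RotData n k q s π) :
    Nat.card (MSet d n k s π) = Nat.card (ESet d n k s π) := by
  have hne := ne_neg_one_of h
  have hs1 : -s - 1 + 1 = -s := by ring
  have hpi : ∀ i, π i ≠ -1 → i ≠ -1 := by
    rintro i hi rfl
    simp at hi
  have mem : ∀ m ∈ MSet d n k s π, gaps d n m ∈ ESet d n k s π := by
    rintro m ⟨hm0, hm1, hm2, hm3⟩
    refine ⟨?_, ?_, ?_⟩
    · rw [Fintype.sum_option, sum_gaps (m := m)]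
      · simp only [gaps]; omega
      · simp [gaps]
      · intro i hi
        have := hm1 i hi
        simp only [gaps, hi, if_false]; omega
    · simp only [gaps, hne, if_false, hs1]; omega
    · intro c hc
      obtain ⟨i, rfl, hi2⟩ := hm3 c
      refine ⟨i, rfl, ?_⟩
      simp only [gaps, hpi i hc, if_false]; omega
  apply Nat.card_eq_of_bijective
    (fun m : MSet d n k s π => (⟨gaps d n m.1, mem m.1 m.2⟩ : ESet d n k s π))
  constructor
  · rintro ⟨m, hm⟩ ⟨m', hm'⟩ he
    have he' : ∀ x, gaps d n m x = gaps d n m' x := congrFun (congrArg Subtype.val he)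
    apply Subtype.ext
    funext i
    show m i = m' i
    revert i
    apply zmod_ind
    · simpa [gaps] using he' (some (-1))
    · intro i hi ih
      have h1 := he' (some i)
      simp only [gaps, hi, if_false] at h1
      have h2 := hm.2.1 i hi
      have h3 := hm'.2.1 i hi
      omega
  · rintro ⟨e, he0, he1, he2⟩
    let m : ZMod n → ℕ := fun i => e (some (-1)) + ∑ l ∈ Finset.range i.val, e (some (l : ZMod n))
    have hm0 : m 0 = e (some (-1)) := by simp [m]
    have hms : ∀ i, i ≠ -1 → m (i + 1) = m i + e (some i) := by
      intro i hi
      simp only [m, val_succ hi, Finset.sum_range_succ, ZMod.natCast_zmod_val]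
      ring
    have hsum := sum_gaps (e := fun i => e (some i)) hm0.symm hms
    rw [Fintype.sum_option, hsum] at he0
    have hg : gaps d n m = e := by
      funext x
      rcases x with _ | i
      · simp only [gaps]; omega
      · by_cases hi : i = -1
        · subst hi; simp [gaps, hm0]
        · have := hms i hi
          simp only [gaps, hi, if_false]; omega
    have hM2 : m (-s - 1) < m (-s) := by
      have := hms _ hne
      rw [hs1] at this
      omega
    refine ⟨⟨m, ?_, ?_, hM2, ?_⟩, Subtype.ext hg⟩
    · omega
    · intro i hi
      have := hms i hi
      omega
    · intro c
      by_cases hc : c = -1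
      · refine ⟨-s - 1, ?_, by rw [hs1]; exact hM2⟩
        rw [map_sub, map_neg, map_one, h.hps, hc]; ring
      · obtain ⟨i, rfl, hi⟩ := he2 c hc
        have := hms i (hpi i hc)
        exact ⟨i, rfl, by omega⟩

/-- Reduced gap sequences. -/
def HSet (D n k : ℕ) [NeZero n] (π : ZMod n →+* ZMod k) : Set (Option (ZMod n) → ℕ) :=
  {e | ∑ x, e x = D ∧ ∀ c, c ≠ -1 → ∃ i, π i = c ∧ e (some i) ≠ 0}

theorem card_ESet [NeZero n] (hd : 2 ≤ d) (h : RotData n k q s π) :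
    Nat.card (HSet (d - 2) n k π) = Nat.card (ESet d n k s π) := by
  classical
  have hc1 : π (-s - 1) = -1 := by
    rw [map_sub, map_neg, map_one, h.hps]; ring
  have hoff : ∀ (g : Option (ZMod n) → ℕ) c, c ≠ -1 → ∀ i, π i = c →
      (g + (Pi.single (some (-s - 1)) 1 : Option (ZMod n) → ℕ)) (some i) = g (some i) := by
    intro g c hc i hi
    have : i ≠ -s - 1 := by
      rintro rfl
      exact hc (by rw [← hi, hc1])
    simp [this]
  apply Nat.card_eq_of_bijective
    (fun g : HSet (d - 2) n k π =>
      (⟨g.1 + Pi.single (some (-s - 1)) 1, by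
        obtain ⟨g, hg1, hg2⟩ := g
        refine ⟨?_, by simp, ?_⟩
        · simp only [Pi.add_apply, Finset.sum_add_distrib, hg1, Finset.sum_pi_single',
            Finset.mem_univ, if_true]
          omega
        · intro c hc
          obtain ⟨i, hi, hi2⟩ := hg2 c hc
          refine ⟨i, hi, ?_⟩
          rw [hoff g c hc i hi]
          exact hi2⟩ : ESet d n k s π))
  constructor
  · intro g g' he
    have := congrArg Subtype.val he
    exact Subtype.ext (add_right_cancel this)
  · rintro ⟨e, he0, he1, he2⟩
    have hE : (e - Pi.single (some (-s - 1)) 1) + Pi.single (some (-s - 1)) 1 = e := by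
      funext x
      by_cases hx : x = some (-s - 1)
      · subst hx; simp; omega
      · simp [hx]
    refine ⟨⟨e - Pi.single (some (-s - 1)) 1, ?_, ?_⟩, Subtype.ext hE⟩
    · have h1 : ∑ x, e x = ∑ x, ((e - (Pi.single (some (-s - 1)) 1 : Option (ZMod n) → ℕ)) x +
          (Pi.single (some (-s - 1)) 1 : Option (ZMod n) → ℕ) x) := by
        conv_lhs => rw [← hE]
        rfl
      rw [Finset.sum_add_distrib, Finset.sum_eq_single
        (f := (Pi.single (some (-s - 1)) 1 : Option (ZMod n) → ℕ)) (some (-s - 1))] at h1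
      · rw [Pi.single_eq_same] at h1
        omega
      · intro b _ hb; simp [hb]
      · simp
    · intro c hc
      obtain ⟨i, hi, hi2⟩ := he2 c hc
      refine ⟨i, hi, ?_⟩
      rw [← hoff (e - Pi.single (some (-s - 1)) 1) c hc i hi, hE]
      exact hi2

/-- Weak compositions meeting every colour in `C`. -/
def W (q D : ℕ) (C : Type) [Fintype C] : Set (Option (Fin q × Option C) → ℕ) :=
  {h | ∑ x, h x = D ∧ ∀ c : C, ∃ a, h (some (a, some c)) ≠ 0}

theorem card_W_congr (q D : ℕ) {C C' : Type} [Fintype C] [Fintype C'] (φ : C ≃ C') :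
    Nat.card (W q D C) = Nat.card (W q D C') := by
  let ψ : Option (Fin q × Option C) ≃ Option (Fin q × Option C') :=
    Equiv.optionCongr (Equiv.prodCongr (Equiv.refl _) (Equiv.optionCongr φ))
  apply Nat.card_congr
  refine (Equiv.arrowCongr ψ (Equiv.refl ℕ)).subtypeEquiv ?_
  intro g
  have h1 : ∑ x, (Equiv.arrowCongr ψ (Equiv.refl ℕ)) g x = ∑ x, g x :=
    Equiv.sum_comp ψ.symm g
  show (∑ x, g x = D ∧ _) ↔ (∑ x, (Equiv.arrowCongr ψ (Equiv.refl ℕ)) g x = D ∧ _)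
  rw [h1]
  refine and_congr Iff.rfl ?_
  have hψ : ∀ a c, ψ.symm (some (a, some (φ c))) = some (a, some c) := by
    intro a c
    rw [Equiv.symm_apply_eq]
    rfl
  constructor
  · intro h c
    obtain ⟨c, rfl⟩ := φ.surjective c
    obtain ⟨a, ha⟩ := h c
    refine ⟨a, ?_⟩
    show g (ψ.symm _) ≠ 0
    rw [hψ]
    exact ha
  · intro h c
    obtain ⟨a, ha⟩ := h (φ c)
    have ha : g (ψ.symm _) ≠ 0 := ha
    rw [hψ] at ha
    exact ⟨a, ha⟩

theorem card_HSet [NeZero n] [NeZero k] (D : ℕ) (h : RotData n k q s π) :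
    Nat.card (HSet D n k π) = Nat.card (W q D (Fin (k - 1))) := by
  classical
  let f : Fin q × ZMod k → ZMod n := fun x => ((k * x.1.val + x.2.val : ℕ) : ZMod n)
  have hf : Function.Bijective f := by
    rw [Fintype.bijective_iff_surjective_and_card]
    constructor
    · intro i
      have hlt := ZMod.val_lt i
      have hk : 0 < k := Nat.pos_of_ne_zero h.hk
      refine ⟨(⟨i.val / k, ?_⟩, (i.val : ZMod k)), ?_⟩
      · apply Nat.div_lt_of_lt_mul
        rw [← h.hnk]; exact hlt
      · simp only [f, ZMod.val_natCast, Nat.div_add_mod, ZMod.natCast_zmod_val]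
    · simp [ZMod.card, h.hnk, mul_comm]
  have hfp : ∀ x, π (f x) = x.2 := by
    intro x
    simp [f]
  let χ : Option (Fin q × Option {c : ZMod k // c ≠ -1}) ≃ Option (ZMod n) :=
    Equiv.optionCongr ((Equiv.prodCongr (Equiv.refl _) (Equiv.optionSubtypeNe (-1))).trans
      (Equiv.ofBijective f hf))
  have e1 : Nat.card (W q D {c : ZMod k // c ≠ -1}) = Nat.card (HSet D n k π) := by
    apply Nat.card_congr
    refine (Equiv.arrowCongr χ (Equiv.refl ℕ)).subtypeEquiv ?_
    intro g
    have h1 : ∑ x, (Equiv.arrowCongr χ (Equiv.refl ℕ)) g x = ∑ x, g x :=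
      Equiv.sum_comp χ.symm g
    show (∑ x, g x = D ∧ _) ↔ (∑ x, (Equiv.arrowCongr χ (Equiv.refl ℕ)) g x = D ∧ _)
    rw [h1]
    refine and_congr Iff.rfl ?_
    have hχ : ∀ a c, χ (some (a, some c)) = some (f (a, c.1)) := by
      intro a c
      simp [χ]
    constructor
    · intro h c hc
      obtain ⟨a, ha⟩ := h ⟨c, hc⟩
      refine ⟨f (a, c), hfp _, ?_⟩
      show g (χ.symm _) ≠ 0
      rw [← hχ a ⟨c, hc⟩, Equiv.symm_apply_apply]
      exact ha
    · rintro h ⟨c, hc⟩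
      obtain ⟨i, hi, ha⟩ := h c hc
      obtain ⟨⟨a, c'⟩, rfl⟩ := hf.2 i
      rw [hfp] at hi
      simp only at hi
      subst hi
      refine ⟨a, ?_⟩
      have ha : g (χ.symm _) ≠ 0 := ha
      rw [← hχ a ⟨c', hc⟩, Equiv.symm_apply_apply] at ha
      exact ha
  rw [← e1]
  apply card_W_congr
  apply Fintype.equivOfCardEq
  have := Fintype.card_congr (Equiv.optionSubtypeNe (-1 : ZMod k))
  rw [Fintype.card_option, ZMod.card] at this
  rw [Fintype.card_fin]; omega

theorem card_total (D : ℕ) (α : Type) [Fintype α] [DecidableEq α] :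
    Nat.card {P : α → ℕ // ∑ i, P i = D} = (Fintype.card α + D - 1).choose D := by
  rw [← Nat.card_congr (Sym.equivNatSumOfFintype α D), Nat.card_eq_fintype_card,
    Sym.card_sym_eq_choose]

theorem total_eq (q D r : ℕ) :
    (q * (r + 1) + D).choose D =
      ∑ j ∈ Finset.range (r + 1), r.choose j * Nat.card (W q D (Fin j)) := by
  classical
  let C := Fin r
  let X := {P : Option (Fin q × Option C) → ℕ // ∑ i, P i = D}
  have hX : Nat.card X = (q * (r + 1) + D).choose D := by
    rw [card_total]
    simp [C]
  have : Finite X := Finite.of_equiv _ (Sym.equivNatSumOfFintype _ D)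
  let J : X → Finset C := fun P => Finset.univ.filter (fun c => ∃ a, P.1 (some (a, some c)) ≠ 0)
  have hfib : ∀ S : Finset C, Nat.card {P : X // J P = S} = Nat.card (W q D (Fin S.card)) := by
    intro S
    rw [← card_W_congr q D S.equivFin]
    let ι : Option (Fin q × Option S) → Option (Fin q × Option C) :=
      Option.map (Prod.map id (Option.map Subtype.val))
    have hι : Function.Injective ι :=
      Option.map_injective (Function.injective_id.prodMap
        (Option.map_injective Subtype.val_injective))
    have hιr : ∀ a c, some (a, some c) ∈ Set.range ι ↔ c ∈ S := by
      intro a c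
      constructor
      · rintro ⟨x, hx⟩
        rcases x with _ | ⟨b, _ | c'⟩
        · simp [ι] at hx
        · simp [ι] at hx
        · simp [ι] at hx
          rw [← hx.2]; exact c'.2
      · intro hc
        exact ⟨some (a, some ⟨c, hc⟩), rfl⟩
    have hιn : ∀ x ∉ Set.range ι, ∃ a c, x = some (a, some c) ∧ c ∉ S := by
      intro x hx
      rcases x with _ | ⟨b, _ | c'⟩
      · exact absurd ⟨none, rfl⟩ hx
      · exact absurd ⟨some (b, none), rfl⟩ hx
      · exact ⟨b, c', rfl, fun hc => hx ((hιr _ _).mpr hc)⟩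
    have hJ0 : ∀ P : X, J P = S → ∀ x ∉ Set.range ι, P.1 x = 0 := by
      intro P hP x hx
      obtain ⟨a, c, rfl, hc⟩ := hιn x hx
      by_contra hne
      apply hc
      rw [← hP]
      simp only [J, Finset.mem_filter, Finset.mem_univ, true_and]
      exact ⟨a, hne⟩
    apply Nat.card_eq_of_bijective
      (fun P : {P : X // J P = S} => (⟨fun x => P.1.1 (ι x), by
        obtain ⟨P, hP⟩ := P
        refine ⟨?_, ?_⟩
        · refine Eq.trans ?_ P.2
          exact Fintype.sum_of_injective ι hι _ _ (hJ0 P hP) (fun _ => rfl)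
        · rintro ⟨c, hc⟩
          rw [← hP] at hc
          simp only [J, Finset.mem_filter, Finset.mem_univ, true_and] at hc
          exact hc⟩ : W q D S))
    constructor
    · rintro ⟨P, hP⟩ ⟨P', hP'⟩ he
      have he' : ∀ x, P.1 (ι x) = P'.1 (ι x) := congrFun (congrArg Subtype.val he)
      apply Subtype.ext
      apply Subtype.ext
      funext x
      show P.1 x = P'.1 x
      by_cases hx : x ∈ Set.range ι
      · obtain ⟨y, rfl⟩ := hx
        exact he' y
      · rw [hJ0 P hP x hx, hJ0 P' hP' x hx]
    · rintro ⟨g, hg1, hg2⟩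
      have hE0 : ∀ x ∉ Set.range ι, Function.extend ι g 0 x = 0 := by
        intro x hx
        rw [Function.extend_apply' _ _ _ (by simpa using hx)]; rfl
      have hE1 : ∀ x, Function.extend ι g 0 (ι x) = g x := fun x => hι.extend_apply _ _ _
      refine ⟨⟨⟨Function.extend ι g 0, ?_⟩, ?_⟩, ?_⟩
      · rw [← hg1]
        exact (Fintype.sum_of_injective ι hι _ _ hE0 (fun x => (hE1 x).symm)).symm
      · ext c
        simp only [J, Finset.mem_filter, Finset.mem_univ, true_and]
        constructor
        · rintro ⟨a, ha⟩
          by_contra hc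
          exact ha (hE0 _ (fun h => hc ((hιr a c).mp h)))
        · intro hc
          obtain ⟨a, ha⟩ := hg2 ⟨c, hc⟩
          refine ⟨a, ?_⟩
          rw [← hE1] at ha
          exact ha
      · apply Subtype.ext
        funext x
        exact hE1 x
  rw [← hX, ← Nat.card_congr (Equiv.sigmaFiberEquiv J), Nat.card_sigma]
  simp only [hfib]
  have := Finset.sum_powerset_apply_card (fun j => Nat.card (W q D (Fin j)))
    (x := (Finset.univ : Finset C))
  rw [Finset.powerset_univ] at this
  rw [this]
  simp [C]

theorem hit_aux {p k q : ℕ} (hk : k ≠ 0) (hq : 2 ≤ q) (hpq : Nat.gcd p q = 1)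
    (i j : ZMod (k * q))
    (hij : ZMod.castHom (Dvd.intro q rfl) (ZMod k) i = ZMod.castHom (Dvd.intro q rfl) (ZMod k) j) :
    ∃ l : ℕ, j = i + l * ((k * p : ℕ) : ZMod (k * q)) := by
  have : NeZero (k * q) := ⟨by positivity⟩
  have : Fact (1 < q) := ⟨by omega⟩
  have h0 : ZMod.castHom (Dvd.intro q rfl) (ZMod k) (j - i) = 0 := by
    rw [map_sub, hij, sub_self]
  have h1 : (((j - i).val : ℕ) : ZMod k) = 0 := by
    rw [← h0]
    conv_rhs => rw [← ZMod.natCast_zmod_val (j - i)]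
    rw [map_natCast]
  rw [ZMod.natCast_eq_zero_iff] at h1
  obtain ⟨u, hu⟩ := h1
  obtain ⟨v, _, hv⟩ := Nat.exists_mul_mod_eq_one_of_coprime (n := p) (k := q) hpq (by omega)
  refine ⟨u * v, ?_⟩
  have h2 : (k * u) ≡ u * v * (k * p) [MOD (k * q)] := by
    have : u ≡ u * (p * v) [MOD q] := by
      have h3 : 1 ≡ p * v [MOD q] := by
        unfold Nat.ModEq; rw [hv, Nat.mod_eq_of_lt (by omega)]
      simpa using h3.mul_left u
    have h4 := this.mul_left' k
    rwa [show k * (u * (p * v)) = u * v * (k * p) by ring] at h4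
  have h3 := (ZMod.natCast_eq_natCast_iff _ _ _).mpr h2
  rw [← hu, ZMod.natCast_zmod_val] at h3
  push_cast at h3 ⊢
  linear_combination h3

theorem rotData {p k q : ℕ} (hk : k ≠ 0) (hq : 2 ≤ q) (hp1 : 1 ≤ p) (hp2 : p ≤ q - 1)
    (hpq : Nat.gcd p q = 1) :
    RotData (k * q) k q ((k * p : ℕ) : ZMod (k * q)) (ZMod.castHom (Dvd.intro q rfl) (ZMod k)) where
  hn := by positivity
  hnk := rfl
  hk := hk
  hq := by omega
  hs0 := by
    rw [Ne, ZMod.natCast_eq_zero_iff]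
    intro h
    have := Nat.dvd_of_mul_dvd_mul_left (Nat.pos_of_ne_zero hk) h
    exact absurd (Nat.le_of_dvd (by omega) this) (by omega)
  hps := by simp
  hqs := by
    rw [← Nat.cast_mul, ZMod.natCast_eq_zero_iff]
    exact ⟨p, by ring⟩
  hit := hit_aux hk hq hpq

theorem count_eq {d p k q : ℕ} (hd : 2 ≤ d) (hk : k ≠ 0) (hq : 2 ≤ q) (hp1 : 1 ≤ p)
    (hp2 : p ≤ q - 1) (hpq : Nat.gcd p q = 1) :
    countRotSets d q p k = Nat.card (W q (d - 2) (Fin (k - 1))) := by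
  have h := rotData hk hq hp1 hp2 hpq
  have : NeZero (k * q) := ⟨h.hn⟩
  have : NeZero k := ⟨hk⟩
  unfold countRotSets
  rw [card_rot hd h, card_MSet h, ← card_ESet hd h, card_HSet _ h]

end RotAux

theorem stmt13 (d q p : ℕ) (hd : 2 ≤ d) (hq : 2 ≤ q)
    (hp1 : 1 ≤ p) (hp2 : p ≤ q - 1) (hpq : Nat.gcd p q = 1) :
    countRotSets d q p 1 = (d - 2 + q).choose (d - 2) ∧
    ∀ k : ℕ, 2 ≤ k → k ≤ d - 1 →
      (countRotSets d q p k : ℤ) =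
        ((d - 2 + k * q).choose (d - 2) : ℤ) -
          ∑ j ∈ Finset.Icc 1 (k - 1),
            ((k - 1).choose (j - 1) : ℤ) * countRotSets d q p j := by
  constructor
  · rw [RotAux.count_eq hd one_ne_zero hq hp1 hp2 hpq]
    have := RotAux.total_eq q (d - 2) 0
    simp at this
    simp [this, add_comm]
  · intro k hk _
    have h1 := RotAux.total_eq q (d - 2) (k - 1)
    rw [Finset.sum_range_succ, show k - 1 + 1 = k by omega, Nat.choose_self, one_mul,
      ← RotAux.count_eq hd (by omega : k ≠ 0) hq hp1 hp2 hpq] at h1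
    have h2 : ∑ j ∈ Finset.Icc 1 (k - 1), (k - 1).choose (j - 1) * countRotSets d q p j =
        ∑ j ∈ Finset.range (k - 1), (k - 1).choose j * Nat.card (RotAux.W q (d - 2) (Fin j)) := by
      rw [Finset.range_eq_Ico, show Finset.Icc 1 (k - 1) = Finset.Ico (0 + 1) (k - 1 + 1) by
        ext; simp, ← Finset.sum_Ico_add']
      apply Finset.sum_congr rfl
      intro j _
      rw [RotAux.count_eq hd (by omega) hq hp1 hp2 hpq]
      simp
    rw [show d - 2 + k * q = q * k + (d - 2) by ring, h1, ← h2]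
    push_cast
    ring
end
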